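/- Let p be a prime, n, d ≥ 1, U an open subset of ℚ_p^d, and f : U → ℚ_p^n an analytic map. Let v ≥ n and x₀ ∈ U be such that w_p(f(x₀)) ≤ v. Then for λ-almost every x in a neighbourhood of x₀ one has w_p(f(x)) ≤ v, where λ denotes the Haar measure on ℚ_p^d. -/

import Mathlib

/-!
After clearing powers of `p`, the condition `w_p (y) ≤ v` says that for every `w > v + 1` the vector
`(1, y)` satisfies `‖q · (1, y)‖_p ≫ ‖q‖ ^ (-w)` over the nonzero integer vectors `q`. In terms of
the lattices `Λ_t (y) = {q ∈ ℤ ^ (n + 1) : ‖q · (1, y)‖_p ≤ p ^ (-t)}` this means that the shortest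
vector of `Λ_t (y)` has length `≫ p ^ (t / w)`. By Minkowski's first theorem, applied here as a
pigeonhole argument, such a bound at the single point `f x₀` bounds the covolume of
`Λ_t (f x₀) ∩ V` from below for every rational subspace `V`.

As a function of `x`, this covolume is the maximum of `1` and `p ^ t` times finitely many
`ℚ_p`-linear combinations of `1, f₁, …, f_n`, up to a constant depending on `V`. These combinations
are `(C, α)`-good near `x₀` with constants uniform in the combination: the functionals form a finite
dimensional space, so the size of a combination near `x₀` is already visible on finitely many
coefficients of its expansion, and an inequality of Bernstein type follows. The quantitative
nondivergence argument of Kleinbock and Margulis then propagates the lower bound on covolumes at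
`x₀` to a lower bound on shortest vectors, off a set of measure `≪ p ^ (-η t)`, and the
Borel–Cantelli lemma finishes the proof.
-/

open MeasureTheory Metric
open scoped ENNReal NNReal

namespace PadicDioph

variable (p : ℕ) [Fact p.Prime]

noncomputable instance : MeasurableSpace ℚ_[p] := borel _
instance : BorelSpace ℚ_[p] := ⟨rfl⟩

/-- Membership in `ℤ[1/p]`, viewed inside `ℚ`. -/
def IsZInvP (q : ℚ) : Prop := ∃ (z : ℤ) (k : ℕ), q = (z : ℚ) / (p : ℚ) ^ k

/-- Sup norm (max of archimedean absolute values) of a finite tuple of rationals. -/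
noncomputable def supNormR {m : ℕ} (q : Fin m → ℚ) : ℝ := ⨆ i, |(q i : ℝ)|

/-- Sup of the `p`-adic absolute values of a finite tuple of rationals. -/
noncomputable def supNormP {m : ℕ} (q : Fin m → ℚ) : ℝ := ⨆ i, ‖((q i : ℚ_[p]))‖

/-- Sup norm of an integer tuple together with an extra integer coordinate. -/
noncomputable def supNormZ {n : ℕ} (q0 : ℤ) (q : Fin n → ℤ) : ℝ :=
  max |(q0 : ℝ)| (⨆ i, |((q i : ℤ) : ℝ)|)

/-- The classical Diophantine exponent `w(y)` of `y ∈ ℚ_p^n`: the supremum of all `v > 0`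
such that `|q₀ + q·y|_p ≤ ‖(q₀,q)‖_∞^{-v}` has infinitely many integer solutions. -/
noncomputable def wExp {n : ℕ} (y : Fin n → ℚ_[p]) : ℝ≥0∞ :=
  ⨆ (v : ℝ) (_ : 0 < v ∧
    {qq : ℤ × (Fin n → ℤ) |
      ‖((qq.1 : ℚ_[p]) + ∑ i, (qq.2 i : ℚ_[p]) * y i)‖ ≤
        (supNormZ qq.1 qq.2) ^ (-v)}.Infinite), ENNReal.ofReal v

/-- `y` is very well approximable if `w(y) > n + 1`. -/
def IsVWA {n : ℕ} (y : Fin n → ℚ_[p]) : Prop :=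
  ENNReal.ofReal ((n : ℝ) + 1) < wExp p y

/-- The defining condition of the exponent `w_p`: there are solutions
`q̃ = (q₀, q) ∈ ℤ[1/p]^{n+1}` of `|q·y + q₀|_p < (‖q‖_p ‖q̃‖_∞)^{-v} ‖q̃‖_∞^{-1}`
with `‖q‖_p ‖q̃‖_∞` arbitrarily large. -/
def WpCond {n : ℕ} (y : Fin n → ℚ_[p]) (v : ℝ) : Prop :=
  ∀ T : ℝ, ∃ (q0 : ℚ) (q : Fin n → ℚ),
    IsZInvP p q0 ∧ (∀ i, IsZInvP p (q i)) ∧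
    T < supNormP p q * supNormR (Fin.cons q0 q) ∧
    ‖(∑ i, (q i : ℚ_[p]) * y i) + (q0 : ℚ_[p])‖ <
      (supNormP p q * supNormR (Fin.cons q0 q)) ^ (-v) * (supNormR (Fin.cons q0 q))⁻¹

/-- The exponent `w_p(y)`. -/
noncomputable def wpExp {n : ℕ} (y : Fin n → ℚ_[p]) : ℝ≥0∞ :=
  ⨆ (v : ℝ) (_ : 0 < v ∧ WpCond p y v), ENNReal.ofReal v

/-- `Π_+` of a tuple of rationals: the product of `|q_i|_∞` over the nonzero coordinates. -/
noncomputable def piPlusQ {m : ℕ} (q : Fin m → ℚ) : ℝ :=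
  ∏ i, (if q i = 0 then 1 else |(q i : ℝ)|)

/-- `Π_+` of `(q₀, q)` with integer coordinates. -/
noncomputable def piPlusZ {n : ℕ} (q0 : ℤ) (q : Fin n → ℤ) : ℝ :=
  (if q0 = 0 then 1 else |(q0 : ℝ)|) * ∏ i, (if q i = 0 then 1 else |((q i : ℤ) : ℝ)|)

/-- `y ∈ ℚ_p^n` is very well multiplicatively approximable. -/
def IsVWMA {n : ℕ} (y : Fin n → ℚ_[p]) : Prop :=
  ∃ ε : ℝ, 0 < ε ∧
    {qq : ℤ × (Fin n → ℤ) |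
      ‖((qq.1 : ℚ_[p]) + ∑ i, (qq.2 i : ℚ_[p]) * y i)‖ ≤
        (piPlusZ qq.1 qq.2) ^ (-(1 + ε))}.Infinite

/-- A measure on `ℚ_p^n` is strongly extremal if almost every point is not VWMA. -/
def StronglyExtremal {n : ℕ} (μ : Measure (Fin n → ℚ_[p])) : Prop :=
  ∀ᵐ y ∂μ, ¬ IsVWMA p y

/-- `δ(g_t u_y D^{n+1})` for the one-parameter flow: `g_t` has `p`-adic component
`diag(p^{-t},1,…,1)` and archimedean component `p^{-t/(n+1)}·Id`. -/
noncomputable def deltaOne {n : ℕ} (y : Fin n → ℚ_[p]) (t : ℕ) : ℝ :=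
  sInf { c : ℝ | ∃ qt : Fin (n + 1) → ℚ, (∀ i, IsZInvP p (qt i)) ∧ qt ≠ 0 ∧
    c = ((p : ℝ) ^ (-(t : ℝ) / ((n : ℝ) + 1)) * supNormR qt) *
        max (‖(((p : ℚ_[p]) ^ t)⁻¹ * ((qt 0 : ℚ_[p]) + ∑ i : Fin n, (qt i.succ : ℚ_[p]) * y i))‖)
            (⨆ i : Fin n, ‖((qt i.succ : ℚ_[p]))‖) }

/-- The exponent `γ(y)`. -/
noncomputable def gammaExp {n : ℕ} (y : Fin n → ℚ_[p]) : ℝ :=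
  sSup {c : ℝ | 0 ≤ c ∧ ∀ N : ℕ, ∃ t : ℕ, N ≤ t ∧
    deltaOne p y t ≤ (p : ℝ) ^ (-(c * (t : ℝ)))}

/-- `δ(g_t u_y D^{n+1})` for the multiparameter flow: for `t = (t₀,…,t_n)` with
`T = Σ tᵢ`, the `p`-adic component of `g_t` is `diag(p^{-T},1,…,1)` and the archimedean
component is `diag(p^{-t₀},…,p^{-t_n})`. -/
noncomputable def deltaMulti {n : ℕ} (y : Fin n → ℚ_[p]) (t : Fin (n + 1) → ℕ) : ℝ :=
  sInf { c : ℝ | ∃ qt : Fin (n + 1) → ℚ, (∀ i, IsZInvP p (qt i)) ∧ qt ≠ 0 ∧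
    c = (⨆ i, (p : ℝ) ^ (-((t i : ℝ))) * |(qt i : ℝ)|) *
        max (‖(((p : ℚ_[p]) ^ (∑ i, t i))⁻¹ *
              ((qt 0 : ℚ_[p]) + ∑ i : Fin n, (qt i.succ : ℚ_[p]) * y i))‖)
            (⨆ i : Fin n, ‖((qt i.succ : ℚ_[p]))‖) }

/-- The support of a measure on a metric space. -/
def measSupp {X : Type*} [MetricSpace X] [MeasurableSpace X] (μ : Measure X) : Set X :=
  {x | ∀ r : ℝ, 0 < r → 0 < μ (ball x r)}

/-- `‖f‖_{μ,B}`. -/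
noncomputable def muSupNorm {X : Type*} [MetricSpace X] [MeasurableSpace X]
    (μ : Measure X) (B : Set X) (f : X → ℚ_[p]) : ℝ :=
  sSup {c : ℝ | 0 < μ {x ∈ B | c < ‖f x‖}}

/-- `f` is `(C, α)`-good on `V` with respect to `μ`. -/
def IsGoodOn {X : Type*} [MetricSpace X] [MeasurableSpace X] (μ : Measure X)
    (C a : ℝ) (V : Set X) (f : X → ℚ_[p]) : Prop :=
  ∀ (x₀ : X) (r : ℝ), 0 < r → x₀ ∈ measSupp μ → ball x₀ r ⊆ V →
    ∀ ε : ℝ, 0 < ε →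
      μ {x ∈ ball x₀ r | ‖f x‖ < ε} ≤
        ENNReal.ofReal (C * (ε / muSupNorm p μ (ball x₀ r) f) ^ a) * μ (ball x₀ r)

/-- A metric space is Besicovitch: any family of balls whose centers exhaust a bounded
set `A` admits a countable subfamily covering `A` with multiplicity at most `N`. -/
def IsBesicovitch (X : Type*) [MetricSpace X] : Prop :=
  ∃ N : ℕ, ∀ (A : Set X), Bornology.IsBounded A →
    ∀ F : Set (X × ℝ), (∀ b ∈ F, 0 < b.2) → (∀ x ∈ A, ∃ r : ℝ, (x, r) ∈ F) →
      ∃ S ⊆ F, S.Countable ∧ (∀ x ∈ A, ∃ b ∈ S, x ∈ ball b.1 b.2) ∧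
        ∀ x : X, {b ∈ S | x ∈ ball b.1 b.2}.encard ≤ N

/-- `μ` is `D`-Federer on the open set `U`. -/
def IsDFedererOn {X : Type*} [MetricSpace X] [MeasurableSpace X]
    (μ : Measure X) (D : ℝ) (U : Set X) : Prop :=
  ∀ x ∈ measSupp μ, ∀ r : ℝ, 0 < r → ball x (3 * r) ⊆ U →
    μ (ball x (3 * r)) ≤ ENNReal.ofReal D * μ (ball x r)

/-- `μ` is Federer. -/
def IsFederer {X : Type*} [MetricSpace X] [MeasurableSpace X] (μ : Measure X) : Prop :=
  ∀ᵐ x ∂μ, ∃ U : Set X, IsOpen U ∧ x ∈ U ∧ 0 < μ U ∧ ∃ D : ℝ, 0 < D ∧ IsDFedererOn μ D U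

/-- The pair `(f, μ)` is good: `μ`-a.e. point has a neighbourhood `V` and `C, α > 0`
such that every affine combination `c₀ + Σ cᵢ fᵢ` is `(C, α)`-good on `V` w.r.t. `μ`. -/
def GoodPair {X : Type*} [MetricSpace X] [MeasurableSpace X] {n : ℕ}
    (f : X → (Fin n → ℚ_[p])) (μ : Measure X) : Prop :=
  ∀ᵐ x ∂μ, ∃ V : Set X, IsOpen V ∧ x ∈ V ∧ ∃ C a : ℝ, 0 < C ∧ 0 < a ∧
    ∀ c0 : ℚ_[p], ∀ c : Fin n → ℚ_[p],
      IsGoodOn p μ C a V (fun x => c0 + ∑ i, c i * f x i)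

/-- `(f, μ)` is nonplanar in the affine subspace `L`. -/
def NonplanarIn {X : Type*} [MetricSpace X] [MeasurableSpace X] {n : ℕ}
    (f : X → (Fin n → ℚ_[p])) (μ : Measure X)
    (L : AffineSubspace ℚ_[p] (Fin n → ℚ_[p])) : Prop :=
  ∀ B : Set X, IsOpen B → B.Nonempty → 0 < μ B →
    affineSpan ℚ_[p] (f '' (B ∩ measSupp μ)) = L

/-- `f` is nondegenerate in the affine subspace `L` at `x`: `f` takes values in `L` and the
span of the partial derivatives of `f` at `x` up to some order is the linear part of `L`. -/
def NondegenerateAt {d n : ℕ} (f : (Fin d → ℚ_[p]) → (Fin n → ℚ_[p]))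
    (L : AffineSubspace ℚ_[p] (Fin n → ℚ_[p])) (x : Fin d → ℚ_[p]) : Prop :=
  (∀ u, f u ∈ L) ∧ ∃ m : ℕ,
    Submodule.span ℚ_[p]
      {v : Fin n → ℚ_[p] | ∃ j : ℕ, j ≤ m ∧ 1 ≤ j ∧ ∃ vs : Fin j → (Fin d → ℚ_[p]),
        v = iteratedFDeriv ℚ_[p] j f x vs} = L.direction

/-- An analytic chart of the `d`-dimensional submanifold `M` of `ℚ_p^n`: an analytic map
`f` on an open set `U`, injective on `U`, immersive, a homeomorphism onto its image, whose
image is a relatively open subset of `M`. -/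
def IsChart (d n : ℕ) (M : Set (Fin n → ℚ_[p]))
    (U : Set (Fin d → ℚ_[p])) (f : (Fin d → ℚ_[p]) → (Fin n → ℚ_[p])) : Prop :=
  IsOpen U ∧ AnalyticOnNhd ℚ_[p] f U ∧ Set.InjOn f U ∧
  (∀ x ∈ U, Function.Injective (fderiv ℚ_[p] f x)) ∧
  (∀ x ∈ U, ∀ V : Set (Fin d → ℚ_[p]), IsOpen V → x ∈ V →
      ∃ W : Set (Fin n → ℚ_[p]), IsOpen W ∧ f x ∈ W ∧ W ∩ f '' U ⊆ f '' (V ∩ U)) ∧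
  ∃ W : Set (Fin n → ℚ_[p]), IsOpen W ∧ M ∩ W = f '' U

/-- `M` is a `d`-dimensional analytic submanifold of `ℚ_p^n`. -/
def IsAnalyticSubmanifold (d n : ℕ) (M : Set (Fin n → ℚ_[p])) : Prop :=
  M.Nonempty ∧ ∀ y ∈ M, ∃ (U : Set (Fin d → ℚ_[p])) (f : (Fin d → ℚ_[p]) → (Fin n → ℚ_[p])),
    IsChart p d n M U f ∧ y ∈ f '' U

section Minors

variable {ι : Type*} [Fintype ι] {j : ℕ}

/-- The sup norm of the Plücker coordinates of the rows of `b`: the largest absolute value of a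
`j × j` minor. The columns are selected by an arbitrary map, since repetitions contribute `0`. -/
def maxMinor (b : Matrix (Fin j) ι ℤ) : ℕ :=
  Finset.univ.sup fun I : Fin j → ι => (b.submatrix id I).det.natAbs

lemma natAbs_det_submatrix_le_maxMinor (b : Matrix (Fin j) ι ℤ) (I : Fin j → ι) :
    (b.submatrix id I).det.natAbs ≤ maxMinor b :=
  Finset.le_sup (f := fun I : Fin j → ι => (b.submatrix id I).det.natAbs) (Finset.mem_univ I)

lemma abs_det_submatrix_le_maxMinor (b : Matrix (Fin j) ι ℤ) (I : Fin j → ι) :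
    |((b.submatrix id I).det : ℝ)| ≤ maxMinor b := by
  rw [← Int.cast_abs, ← Nat.cast_natAbs]
  exact_mod_cast natAbs_det_submatrix_le_maxMinor b I

lemma maxMinor_mul (A : Matrix (Fin j) (Fin j) ℤ) (b : Matrix (Fin j) ι ℤ) :
    maxMinor (A * b) = A.det.natAbs * maxMinor b := by
  unfold maxMinor
  rw [Finset.mul_sup₀]
  congr 1 with I
  rw [Matrix.submatrix_mul _ _ id id I Function.bijective_id, Matrix.det_mul, Int.natAbs_mul,
    Matrix.submatrix_id_id]

lemma exists_natAbs_det_submatrix_eq_maxMinor {b : Matrix (Fin j) ι ℤ} (hb : maxMinor b ≠ 0) :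
    ∃ I : Fin j → ι, (b.submatrix id I).det.natAbs = maxMinor b := by
  have : Nonempty (Fin j → ι) := by
    by_contra h
    rw [not_nonempty_iff] at h
    simp [maxMinor] at hb
  obtain ⟨I, -, hI⟩ := Finset.exists_mem_eq_sup Finset.univ Finset.univ_nonempty
    (fun I : Fin j → ι => (b.submatrix id I).det.natAbs)
  exact ⟨I, hI.symm⟩

lemma maxMinor_ne_zero_of_linearIndependent {b : Matrix (Fin j) ι ℤ}
    (hb : LinearIndependent ℤ b.row) : maxMinor b ≠ 0 := by
  let M : Matrix (Fin j) ι ℚ := b.map (Int.castRingHom ℚ)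
  have hM : LinearIndependent ℚ M.row := by
    rw [← LinearIndependent.iff_fractionRing ℤ ℚ]
    refine hb.map' ((Algebra.linearMap ℤ ℚ).compLeft ι) (LinearMap.ker_eq_bot.2 fun x z h => ?_)
    exact funext fun l => Int.cast_injective (congrFun h l)
  obtain ⟨κ, a, ha, hspan, hcols⟩ := exists_linearIndependent' ℚ M.col
  have : Finite κ := Finite.of_injective a ha
  have := Fintype.ofFinite κ
  have hcard : Fintype.card κ = j := by
    rw [linearIndependent_iff_card_eq_finrank_span.mp hcols, Set.finrank, hspan,
      ← Matrix.rank_eq_finrank_span_cols, hM.rank_matrix, Fintype.card_fin]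
  let e : Fin j ≃ κ := (Fintype.equivFinOfCardEq hcard).symm
  have hdet : (M.submatrix id (a ∘ e)).det ≠ 0 := by
    have h : LinearIndependent ℚ (M.submatrix id (a ∘ e)).col := hcols.comp e e.injective
    rw [Matrix.linearIndependent_cols_iff_isUnit, Matrix.isUnit_iff_isUnit_det] at h
    exact h.ne_zero
  have hcast : (M.submatrix id (a ∘ e)).det = ((b.submatrix id (a ∘ e)).det : ℚ) :=
    ((Int.castRingHom ℚ).map_det (b.submatrix id (a ∘ e))).symm
  have hminor : (b.submatrix id (a ∘ e)).det.natAbs ≠ 0 := by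
    rw [Int.natAbs_ne_zero]
    exact_mod_cast hcast ▸ hdet
  exact (Nat.pos_of_ne_zero hminor |>.trans_le (natAbs_det_submatrix_le_maxMinor b _)).ne'

lemma maxMinor_cons_le (q : ι → ℤ) (b : Matrix (Fin j) ι ℤ) :
    (maxMinor (Matrix.of (Fin.cons q b)) : ℝ) ≤ (j + 1) * ‖q‖ * maxMinor b := by
  rcases eq_or_ne (maxMinor (Matrix.of (Fin.cons q b))) 0 with h0 | h0
  · rw [h0, Nat.cast_zero]
    positivity
  obtain ⟨I, hI⟩ := exists_natAbs_det_submatrix_eq_maxMinor h0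
  rw [← hI, Nat.cast_natAbs, Int.cast_abs, Matrix.det_succ_row_zero, Int.cast_sum]
  simp only [Int.cast_mul, Int.cast_pow, Int.cast_neg, Int.cast_one]
  refine (Finset.abs_sum_le_sum_abs _ _).trans
    ((Finset.sum_le_card_nsmul _ _ (‖q‖ * maxMinor b) fun l _ => ?_).trans_eq ?_)
  · rw [abs_mul, abs_mul, abs_pow, abs_neg, abs_one, one_pow, one_mul]
    have hentry : |(q (I l) : ℝ)| ≤ ‖q‖ := by
      simpa only [Int.norm_eq_abs] using norm_le_pi_norm q (I l)
    exact mul_le_mul hentry (abs_det_submatrix_le_maxMinor b fun i => I (l.succAbove i))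
      (abs_nonneg _) (norm_nonneg _)
  · simp only [Finset.card_univ, Fintype.card_fin, nsmul_eq_mul, Nat.cast_succ]
    ring

omit [Fintype ι] in
lemma det_mul_vecMul_eq_sum_cramer (b : Matrix (Fin j) ι ℤ) (I : Fin j → ι) (a : Fin j → ℤ)
    (l : ι) : (b.submatrix id I).det * Matrix.vecMul a b l =
      ∑ k, Matrix.vecMul a b (I k) * (b.submatrix id (Function.update I k l)).det := by
  have hcramer (k : Fin j) : (b.submatrix id (Function.update I k l)).det =
      Matrix.cramer (b.submatrix id I) (fun i => b i l) k := by
    rw [Matrix.cramer_apply]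
    congr 1
    ext i r
    obtain rfl | hr := eq_or_ne r k
    · simp
    · simp [Matrix.updateCol_ne hr, Function.update_of_ne hr]
  simp only [hcramer]
  calc (b.submatrix id I).det * Matrix.vecMul a b l
      = a ⬝ᵥ (b.submatrix id I).mulVec (Matrix.cramer (b.submatrix id I) fun i => b i l) := by
        rw [Matrix.mulVec_cramer, dotProduct_smul, smul_eq_mul]
        rfl
    _ = _ := by
        rw [Matrix.dotProduct_mulVec]
        rfl

lemma norm_vecMul_le_of_maximal_minor {b : Matrix (Fin j) ι ℤ} (hb : maxMinor b ≠ 0)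
    {I : Fin j → ι} (hI : (b.submatrix id I).det.natAbs = maxMinor b) (a : Fin j → ℤ) {m : ℝ}
    (hm : 0 ≤ m) (ha : ∀ k, |((Matrix.vecMul a b (I k) : ℤ) : ℝ)| ≤ m) :
    ‖Matrix.vecMul a b‖ ≤ j * m := by
  refine (pi_norm_le_iff_of_nonneg (by positivity)).2 fun l => ?_
  have hdet : |((b.submatrix id I).det : ℝ)| = maxMinor b := by
    rw [← hI, Nat.cast_natAbs, Int.cast_abs]
  have hpos : (0 : ℝ) < maxMinor b := by exact_mod_cast Nat.pos_of_ne_zero hb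
  refine le_of_mul_le_mul_left ?_ hpos
  rw [Int.norm_eq_abs]
  calc (maxMinor b : ℝ) * |((Matrix.vecMul a b l : ℤ) : ℝ)|
      = |∑ k, ((Matrix.vecMul a b (I k) : ℤ) : ℝ) *
          ((b.submatrix id (Function.update I k l)).det : ℝ)| := by
        rw [← hdet, ← abs_mul]
        exact_mod_cast congrArg (fun z : ℤ => |(z : ℝ)|) (det_mul_vecMul_eq_sum_cramer b I a l)
    _ ≤ ∑ _k : Fin j, m * maxMinor b := by
        refine (Finset.abs_sum_le_sum_abs _ _).trans (Finset.sum_le_sum fun k _ => ?_)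
        rw [abs_mul]
        exact mul_le_mul (ha k) (abs_det_submatrix_le_maxMinor b _) (abs_nonneg _) hm
    _ = maxMinor b * (j * m) := by
        rw [Finset.sum_const, Finset.card_univ, Fintype.card_fin, nsmul_eq_mul]
        ring

end Minors

section LatticeBasis

variable {ι : Type*} [Finite ι]

/-- The rows of `latticeMatrix Λ` are a basis of the lattice `Λ ⊆ ℤ^ι`. -/
noncomputable def latticeMatrix (Λ : Submodule ℤ (ι → ℤ)) :
    Matrix (Fin (Module.finrank ℤ Λ)) ι ℤ :=
  Matrix.of fun i => (Module.finBasis ℤ Λ i : ι → ℤ)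

lemma linearIndependent_latticeMatrix (Λ : Submodule ℤ (ι → ℤ)) :
    LinearIndependent ℤ (latticeMatrix Λ).row :=
  (Module.finBasis ℤ Λ).linearIndependent.map' Λ.subtype Λ.ker_subtype

lemma mem_iff_exists_vecMul_latticeMatrix {Λ : Submodule ℤ (ι → ℤ)} {q : ι → ℤ} :
    q ∈ Λ ↔ ∃ a, Matrix.vecMul a (latticeMatrix Λ) = q := by
  simp only [Matrix.vecMul_eq_sum]
  constructor
  · intro hq
    refine ⟨(Module.finBasis ℤ Λ).repr ⟨q, hq⟩, ?_⟩
    have h := congrArg Λ.subtype ((Module.finBasis ℤ Λ).sum_repr ⟨q, hq⟩)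
    rw [map_sum] at h
    exact h
  · rintro ⟨a, rfl⟩
    exact sum_mem fun i _ => Λ.smul_mem _ (Module.finBasis ℤ Λ i).2

end LatticeBasis

section Covolume

variable {ι : Type*} [Fintype ι]

/-- The covolume of a lattice `Λ ⊆ ℤ^ι`, measured by the sup norm on the exterior power rather
than the Euclidean one. -/
noncomputable def covol (Λ : Submodule ℤ (ι → ℤ)) : ℕ := maxMinor (latticeMatrix Λ)

lemma maxMinor_eq_natAbs_det_mul_covol (Λ : Submodule ℤ (ι → ℤ))
    (b : Fin (Module.finrank ℤ Λ) → Λ) :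
    maxMinor (Matrix.of fun i => (b i : ι → ℤ)) =
      ((Module.finBasis ℤ Λ).det b).natAbs * covol Λ := by
  have hb : (Matrix.of fun i => (b i : ι → ℤ)) =
      ((Module.finBasis ℤ Λ).toMatrix b).transpose * latticeMatrix Λ := by
    ext i l
    rw [Matrix.of_apply, ← (Module.finBasis ℤ Λ).sum_toMatrix_smul_self b i]
    simp only [Submodule.coe_sum, Submodule.coe_smul, Finset.sum_apply, Pi.smul_apply,
      smul_eq_mul, Matrix.mul_apply, Matrix.transpose_apply, latticeMatrix, Matrix.of_apply]
  rw [hb, maxMinor_mul, Matrix.det_transpose, Module.Basis.det_apply, covol]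

lemma covol_eq_maxMinor {Λ : Submodule ℤ (ι → ℤ)} {j : ℕ} (b : Module.Basis (Fin j) ℤ Λ) :
    covol Λ = maxMinor (Matrix.of fun i => (b i : ι → ℤ)) := by
  obtain rfl : j = Module.finrank ℤ Λ := by
    rw [Module.finrank_eq_card_basis b, Fintype.card_fin]
  rw [maxMinor_eq_natAbs_det_mul_covol,
    Int.isUnit_iff_natAbs_eq.1 ((Module.finBasis ℤ Λ).isUnit_det b), one_mul]

lemma covol_bot : covol (⊥ : Submodule ℤ (ι → ℤ)) = 1 := by
  rw [covol_eq_maxMinor (Module.Basis.empty (ι := Fin 0) _)]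
  simp [maxMinor]

lemma covol_ne_zero (Λ : Submodule ℤ (ι → ℤ)) : covol Λ ≠ 0 :=
  maxMinor_ne_zero_of_linearIndependent (linearIndependent_latticeMatrix Λ)

lemma covol_le_maxMinor {Λ : Submodule ℤ (ι → ℤ)} {j : ℕ} (hj : j = Module.finrank ℤ Λ)
    {b : Matrix (Fin j) ι ℤ} (hb : LinearIndependent ℤ b.row) (hmem : ∀ i, b i ∈ Λ) :
    covol Λ ≤ maxMinor b := by
  subst hj
  have h := maxMinor_eq_natAbs_det_mul_covol Λ fun i => ⟨b i, hmem i⟩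
  change maxMinor b = _ at h
  have hb0 := maxMinor_ne_zero_of_linearIndependent hb
  rw [h] at hb0 ⊢
  exact Nat.le_mul_of_pos_left _ (Nat.pos_of_ne_zero (left_ne_zero_of_mul hb0))

lemma covol_eq_relIndex_mul {Γ Λ : Submodule ℤ (ι → ℤ)} (hle : Γ ≤ Λ)
    (hindex : Γ.toAddSubgroup.relIndex Λ.toAddSubgroup ≠ 0) :
    Module.finrank ℤ Γ = Module.finrank ℤ Λ ∧
      covol Γ = Γ.toAddSubgroup.relIndex Λ.toAddSubgroup * covol Λ := by
  have hfin : Γ.toAddSubgroup.IsFiniteRelIndex Λ.toAddSubgroup := ⟨hindex⟩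
  have : Module.Finite ℤ Λ.toAddSubgroup := inferInstanceAs (Module.Finite ℤ Λ)
  have : Module.IsTorsionFree ℤ Λ.toAddSubgroup := inferInstanceAs (Module.IsTorsionFree ℤ Λ)
  have hrank : Module.finrank ℤ Γ = Module.finrank ℤ Λ :=
    AddSubgroup.finrank_eq_of_isFiniteRelIndex (A := Γ.toAddSubgroup) (B := Λ.toAddSubgroup) hle
  let b : Module.Basis (Fin (Module.finrank ℤ Λ)) ℤ Γ := Module.finBasisOfFinrankEq ℤ Γ hrank
  refine ⟨hrank, ?_⟩
  rw [AddSubgroup.relIndex_eq_natAbs_det Γ.toAddSubgroup Λ.toAddSubgroup hle b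
      (Module.finBasis ℤ Λ), covol_eq_maxMinor b]
  exact maxMinor_eq_natAbs_det_mul_covol Λ fun i => ⟨b i, hle (b i).2⟩

lemma covol_le_mul_of_mem {Λ Γ : Submodule ℤ (ι → ℤ)} (hle : Λ ≤ Γ)
    (hrank : Module.finrank ℤ Γ = Module.finrank ℤ Λ + 1) {q : ι → ℤ} (hq : q ∈ Γ)
    (hli : ∀ m : ℤ, m • q ∈ Λ → m = 0) :
    (covol Γ : ℝ) ≤ Module.finrank ℤ Γ * ‖q‖ * covol Λ := by
  have hli' : LinearIndependent ℤ (Fin.cons q (latticeMatrix Λ) : Fin _ → ι → ℤ) := by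
    refine (linearIndependent_latticeMatrix Λ).finCons' _ _ fun m z hz hmz => hli m ?_
    have hzΛ : z ∈ Λ :=
      Submodule.span_le.2 (Set.range_subset_iff.2 fun i => (Module.finBasis ℤ Λ i).2) hz
    exact eq_neg_of_add_eq_zero_left hmz ▸ Λ.neg_mem hzΛ
  have hmem (i : Fin (Module.finrank ℤ Λ + 1)) : Matrix.of (Fin.cons q (latticeMatrix Λ)) i ∈ Γ :=
    Fin.cases hq (fun i => hle (Module.finBasis ℤ Λ i).2) i
  have h := (Nat.cast_le (α := ℝ).2 (covol_le_maxMinor hrank.symm hli' hmem)).trans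
    (maxMinor_cons_le q (latticeMatrix Λ))
  rw [hrank]
  exact_mod_cast h

end Covolume

section Minkowski

lemma exists_ne_zero_mem_abs_le_of_index_lt {κ : Type*} [Fintype κ] (H : AddSubgroup (κ → ℤ))
    (hH : H.index ≠ 0) {m : ℕ} (hm : H.index < (m + 1) ^ Fintype.card κ) :
    ∃ v ∈ H, v ≠ 0 ∧ ∀ k, |v k| ≤ m := by
  classical
  have : Finite ((κ → ℤ) ⧸ H) := Nat.finite_of_card_ne_zero hH
  have := Fintype.ofFinite ((κ → ℤ) ⧸ H)
  let intVec (z : κ → Fin (m + 1)) : κ → ℤ := fun k => (z k : ℕ)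
  obtain ⟨z, z', hne, heq⟩ := Fintype.exists_ne_map_eq_of_card_lt
    (fun z => (intVec z : (κ → ℤ) ⧸ H)) (by
      rw [← Nat.card_eq_fintype_card, Fintype.card_fun, Fintype.card_fin]
      exact hm)
  refine ⟨-intVec z + intVec z', QuotientAddGroup.eq.1 heq, fun h0 => hne ?_, fun k => ?_⟩
  · ext k
    have := congrFun h0 k
    simp only [intVec, Pi.add_apply, Pi.neg_apply, Pi.zero_apply] at this
    omega
  · simp only [intVec, Pi.add_apply, Pi.neg_apply, abs_le]
    omega

lemma exists_vecMul_ne_zero_abs_le {j : ℕ} (M : Matrix (Fin j) (Fin j) ℤ) (hM : M.det ≠ 0)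
    {m : ℕ} (hm : M.det.natAbs < (m + 1) ^ j) :
    ∃ a : Fin j → ℤ, Matrix.vecMul a M ≠ 0 ∧ ∀ k, |Matrix.vecMul a M k| ≤ m := by
  let rows : Module.Basis (Fin j) ℤ (Submodule.span ℤ (Set.range M.row)) :=
    .span (Matrix.linearIndependent_rows_of_det_ne_zero hM)
  have hindex : (Submodule.span ℤ (Set.range M.row)).toAddSubgroup.index = M.det.natAbs := by
    rw [AddSubgroup.index_eq_natAbs_det (Pi.basisFun ℤ (Fin j)) _ rows, Module.Basis.det_apply,
      ← Matrix.det_transpose]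
    congr 2
    ext i k
    rw [Matrix.transpose_apply, Module.Basis.toMatrix_apply, Pi.basisFun_repr,
      Module.Basis.span_apply]
    rfl
  obtain ⟨v, hv, hv0, hvm⟩ := exists_ne_zero_mem_abs_le_of_index_lt
    (Submodule.span ℤ (Set.range M.row)).toAddSubgroup (m := m)
    (by rwa [hindex, Int.natAbs_ne_zero]) (by rwa [hindex, Fintype.card_fin])
  obtain ⟨a, rfl⟩ := (Submodule.mem_span_range_iff_exists_fun ℤ).1 hv
  exact ⟨a, by rwa [Matrix.vecMul_eq_sum], by rwa [Matrix.vecMul_eq_sum]⟩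

variable {ι : Type*} [Fintype ι]

-- Pigeonhole finds an integer combination of the basis with small coordinates in the columns of
-- a maximal minor; by Cramer's rule these columns control all the others.
theorem exists_ne_zero_mem_norm_le {Λ : Submodule ℤ (ι → ℤ)} {m : ℕ}
    (hm : covol Λ < (m + 1) ^ Module.finrank ℤ Λ) :
    ∃ q ∈ Λ, q ≠ 0 ∧ ‖q‖ ≤ Module.finrank ℤ Λ * m := by
  obtain ⟨I, hI⟩ := exists_natAbs_det_submatrix_eq_maxMinor (covol_ne_zero Λ)
  have hdet : ((latticeMatrix Λ).submatrix id I).det ≠ 0 := by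
    rw [← Int.natAbs_ne_zero, hI]
    exact covol_ne_zero Λ
  obtain ⟨a, ha0, ham⟩ := exists_vecMul_ne_zero_abs_le _ hdet (hI.trans_lt hm)
  refine ⟨_, mem_iff_exists_vecMul_latticeMatrix.2 ⟨a, rfl⟩,
    fun h => ha0 (funext fun k => congrFun h (I k)),
    norm_vecMul_le_of_maximal_minor (covol_ne_zero Λ) hI a m.cast_nonneg fun k => ?_⟩
  exact_mod_cast ham k

theorem pow_le_covol_of_forall_le_norm {Λ : Submodule ℤ (ι → ℤ)} {δ : ℝ} (hδ : 0 ≤ δ)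
    (h : ∀ q ∈ Λ, q ≠ 0 → δ ≤ ‖q‖) :
    (δ / Module.finrank ℤ Λ) ^ Module.finrank ℤ Λ ≤ covol Λ := by
  set r := Module.finrank ℤ Λ
  rcases r.eq_zero_or_pos with h0 | hpos
  · rw [h0, pow_zero]
    exact_mod_cast Nat.one_le_iff_ne_zero.2 (covol_ne_zero Λ)
  have hm : covol Λ < (Nat.nthRoot r (covol Λ) + 1) ^ r := Nat.lt_pow_nthRoot_add_one hpos.ne' _
  obtain ⟨q, hq, hq0, hqm⟩ := exists_ne_zero_mem_norm_le hm
  have hr' : (0 : ℝ) < r := by exact_mod_cast hpos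
  have hδm : δ / r ≤ Nat.nthRoot r (covol Λ) := by
    rw [div_le_iff₀' hr']
    exact (h q hq hq0).trans hqm
  calc (δ / r) ^ r ≤ (Nat.nthRoot r (covol Λ) : ℝ) ^ r := by gcongr
    _ ≤ covol Λ := by exact_mod_cast Nat.pow_nthRoot_le (.inl hpos.ne')

end Minkowski

section RationalSubspaces

variable {ι : Type*}

/-- The inclusion `ℤ^ι ⊆ ℚ^ι`. -/
noncomputable def ratVec : (ι → ℤ) →ₗ[ℤ] (ι → ℚ) := (Algebra.linearMap ℤ ℚ).compLeft ι

lemma ratVec_injective : Function.Injective (ratVec : (ι → ℤ) →ₗ[ℤ] (ι → ℚ)) :=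
  fun _ _ h => funext fun l => Int.cast_injective (congrFun h l)

/-- The lattice `V ∩ ℤ^ι` of integer points of a rational subspace `V ⊆ ℚ^ι`. -/
noncomputable def intPoints (V : Submodule ℚ (ι → ℚ)) : Submodule ℤ (ι → ℤ) :=
  (V.restrictScalars ℤ).comap ratVec

lemma mem_intPoints {V : Submodule ℚ (ι → ℚ)} {q : ι → ℤ} : q ∈ intPoints V ↔ ratVec q ∈ V :=
  Iff.rfl

lemma intPoints_mono {V W : Submodule ℚ (ι → ℚ)} (h : V ≤ W) : intPoints V ≤ intPoints W :=
  fun _ hq => h hq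

variable [Finite ι]

lemma exists_smul_eq_ratVec (v : ι → ℚ) :
    ∃ (m : ℤ) (q : ι → ℤ), m ≠ 0 ∧ (m : ℚ) • v = ratVec q := by
  obtain ⟨m, hm⟩ := IsLocalization.exist_integer_multiples_of_finite (nonZeroDivisors ℤ) v
  choose q hq using hm
  refine ⟨m, q, nonZeroDivisors.coe_ne_zero m, funext fun l => ?_⟩
  simpa [ratVec] using (hq l).symm

lemma finrank_intPoints (V : Submodule ℚ (ι → ℚ)) :
    Module.finrank ℤ (intPoints V) = Module.finrank ℚ V := by
  let b := fun i => ratVec (latticeMatrix (intPoints V) i)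
  have hli : LinearIndependent ℚ b :=
    (LinearIndependent.iff_fractionRing ℤ ℚ).1 <|
      (linearIndependent_latticeMatrix _).map' ratVec (LinearMap.ker_eq_bot.2 ratVec_injective)
  have hspan : Submodule.span ℚ (Set.range b) = V := by
    refine le_antisymm (Submodule.span_le.2 ?_) fun v hv => ?_
    · rintro _ ⟨i, rfl⟩
      exact (Module.finBasis ℤ (intPoints V) i).2
    obtain ⟨m, q, hm, hq⟩ := exists_smul_eq_ratVec v
    have hqV : q ∈ intPoints V := by
      rw [mem_intPoints, ← hq]
      exact V.smul_mem _ hv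
    obtain ⟨a, rfl⟩ := mem_iff_exists_vecMul_latticeMatrix.1 hqV
    rw [← Submodule.smul_mem_iff _ (Int.cast_ne_zero (α := ℚ).2 hm), hq,
      Matrix.vecMul_eq_sum, map_sum]
    refine sum_mem fun i _ => ?_
    rw [map_smul, ← Int.cast_smul_eq_zsmul ℚ]
    exact Submodule.smul_mem _ _ (Submodule.subset_span ⟨i, rfl⟩)
  rw [← finrank_span_eq_card hli |>.trans (Fintype.card_fin _), hspan]

end RationalSubspaces

section SmallForms

variable {p} {ι : Type*} [Fintype ι]

/-- The integral linear form `q ↦ ∑ i, q i * y i` attached to `y ∈ ℚ_p^ι`. -/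
noncomputable def linForm (y : ι → ℚ_[p]) : (ι → ℤ) →ₗ[ℤ] ℚ_[p] := Fintype.linearCombination ℤ y

lemma linForm_apply (y : ι → ℚ_[p]) (q : ι → ℤ) : linForm y q = ∑ i, (q i : ℚ_[p]) * y i := by
  simp only [linForm, Fintype.linearCombination_apply, zsmul_eq_mul]

/-- The lattice of all `q ∈ ℤ^ι` whose linear form at `y` is at most `p⁻ᵗ`. -/
noncomputable def smallPoints (t : ℕ) (y : ι → ℚ_[p]) : Submodule ℤ (ι → ℤ) where
  carrier := {q | ‖linForm y q‖ ≤ (p : ℝ) ^ (-t : ℤ)}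
  zero_mem' := by
    rw [Set.mem_ofPred_eq, map_zero, norm_zero]
    positivity
  add_mem' hq hr := by
    rw [Set.mem_ofPred_eq, map_add]
    exact (IsUltrametricDist.norm_add_le_max _ _).trans (max_le hq hr)
  smul_mem' m q hq := by
    rw [Set.mem_ofPred_eq, map_smul, zsmul_eq_mul, norm_mul]
    exact (mul_le_of_le_one_left (norm_nonneg _) (Padic.norm_int_le_one m)).trans hq

lemma mem_smallPoints {t : ℕ} {y : ι → ℚ_[p]} {q : ι → ℤ} :
    q ∈ smallPoints t y ↔ ‖linForm y q‖ ≤ (p : ℝ) ^ (-t : ℤ) :=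
  Iff.rfl

lemma index_eq_pow_of_mem_iff_norm_le {G : Type*} [AddGroup G] (φ : G →+ ℤ_[p]) {g₀ : G}
    (hg₀ : φ g₀ = 1) (e : ℕ) {H : AddSubgroup G}
    (hH : ∀ g, g ∈ H ↔ ‖φ g‖ ≤ (p : ℝ) ^ (-e : ℤ)) : H.index = p ^ e := by
  let red : G →+ ZMod (p ^ e) := (PadicInt.toZModPow e).toAddMonoidHom.comp φ
  have hker : H = red.ker := by
    ext g
    rw [hH, PadicInt.norm_le_pow_iff_mem_span_pow, ← PadicInt.ker_toZModPow]
    rfl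
  have hsurj : Function.Surjective red := fun c => by
    obtain ⟨m, rfl⟩ := ZMod.intCast_surjective c
    exact ⟨m • g₀, by simp [red, hg₀]⟩
  rw [hker, AddSubgroup.index_ker, AddMonoidHom.range_eq_top.2 hsurj, AddSubgroup.card_top,
    Nat.card_zmod]

lemma index_eq_pow_mul_norm {G : Type*} [AddGroup G] (φ : G →+ ℚ_[p]) (t : ℕ) {g₀ : G}
    (hmax : ∀ g, ‖φ g‖ ≤ ‖φ g₀‖) (hg₀ : (p : ℝ) ^ (-t : ℤ) ≤ ‖φ g₀‖) {H : AddSubgroup G}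
    (hH : ∀ g, g ∈ H ↔ ‖φ g‖ ≤ (p : ℝ) ^ (-t : ℤ)) : (H.index : ℝ) = p ^ t * ‖φ g₀‖ := by
  have hp : (1 : ℝ) < p := by exact_mod_cast (Fact.out : p.Prime).one_lt
  have hne : φ g₀ ≠ 0 := norm_pos_iff.1 (lt_of_lt_of_le (by positivity) hg₀)
  obtain ⟨e, he⟩ : ∃ e : ℕ, ‖φ g₀‖ = (p : ℝ) ^ ((e : ℤ) - t) := by
    have hval := Padic.norm_eq_zpow_neg_valuation hne
    rw [hval, zpow_le_zpow_iff_right₀ hp] at hg₀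
    exact ⟨((t : ℤ) - (φ g₀).valuation).toNat, by rw [hval]; congr 1; omega⟩
  let quot : G →+ ℤ_[p] :=
    { toFun := fun g => ⟨φ g / φ g₀, by
        rw [norm_div]
        exact div_le_one_of_le₀ (hmax g) (norm_nonneg _)⟩
      map_zero' := Subtype.ext ((congrArg (· / φ g₀) (map_zero φ)).trans (zero_div _))
      map_add' := fun g h =>
        Subtype.ext ((congrArg (· / φ g₀) (map_add φ g h)).trans (add_div _ _ _)) }
  have hquot (g : G) : ‖quot g‖ = ‖φ g‖ / ‖φ g₀‖ := norm_div (φ g) (φ g₀)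
  have hindex : H.index = p ^ e :=
    index_eq_pow_of_mem_iff_norm_le quot (g₀ := g₀) (Subtype.ext (div_self hne)) e fun g => by
      rw [hquot, div_le_iff₀ (norm_pos_iff.2 hne), he, hH, ← zpow_add₀ (by positivity)]
      congr! 2
      ring
  rw [hindex, he, Nat.cast_pow, ← zpow_natCast, ← zpow_natCast, ← zpow_add₀ (by positivity),
    add_sub_cancel]

lemma exists_norm_apply_eq_norm {κ E : Type*} [Fintype κ] [SeminormedAddGroup E] {g : κ → E}
    (hg : 0 < ‖g‖) : ∃ i, ‖g i‖ = ‖g‖ := by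
  by_contra! h
  exact lt_irrefl _ ((pi_norm_lt_iff hg).2 fun i => (norm_le_pi_norm g i).lt_of_ne (h i))

lemma norm_linForm_le {Λ : Submodule ℤ (ι → ℤ)} (y : ι → ℚ_[p]) {q : ι → ℤ} (hq : q ∈ Λ) :
    ‖linForm y q‖ ≤ ‖fun i => linForm y (latticeMatrix Λ i)‖ := by
  obtain ⟨a, rfl⟩ := mem_iff_exists_vecMul_latticeMatrix.1 hq
  rw [Matrix.vecMul_eq_sum, map_sum]
  refine IsUltrametricDist.norm_sum_le_of_forall_le_of_nonneg (norm_nonneg _) fun i _ => ?_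
  rw [map_smul, zsmul_eq_mul, norm_mul]
  exact (mul_le_of_le_one_left (norm_nonneg _) (Padic.norm_int_le_one _)).trans
    (norm_le_pi_norm (fun i => linForm y (latticeMatrix Λ i)) i)

lemma relIndex_inf_smallPoints (Λ : Submodule ℤ (ι → ℤ)) (t : ℕ) (y : ι → ℚ_[p]) :
    ((Λ ⊓ smallPoints t y).toAddSubgroup.relIndex Λ.toAddSubgroup : ℝ) =
      max 1 (p ^ t * ‖fun i => linForm y (latticeMatrix Λ i)‖) := by
  set s := ‖fun i => linForm y (latticeMatrix Λ i)‖
  have hpt : (0 : ℝ) < p ^ t := by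
    have := (Fact.out : p.Prime).pos
    positivity
  have hzpow : (p : ℝ) ^ (-t : ℤ) = 1 / p ^ t := by rw [zpow_neg, zpow_natCast, one_div]
  rcases le_or_gt (p ^ t * s) 1 with hs | hs
  · rw [max_eq_left hs, AddSubgroup.relIndex_eq_one.2, Nat.cast_one]
    refine fun q hq => ⟨hq, (norm_linForm_le y hq).trans ?_⟩
    rwa [hzpow, le_div_iff₀' hpt]
  obtain ⟨i, hi⟩ : ∃ i, s = ‖linForm y (latticeMatrix Λ i)‖ := by
    have hs0 : 0 < s := pos_of_mul_pos_right (one_pos.trans hs) hpt.le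
    exact (exists_norm_apply_eq_norm hs0).imp fun i hi => hi.symm
  rw [max_eq_right hs.le, hi]
  refine index_eq_pow_mul_norm (g₀ := Module.finBasis ℤ Λ i)
    ((linForm y).toAddMonoidHom.comp Λ.toAddSubgroup.subtype) t
    (fun g => (norm_linForm_le y g.2).trans_eq hi) ?_ fun g => ?_
  · exact hi ▸ (hzpow.trans_le ((div_le_iff₀' hpt).2 hs.le))
  · exact and_iff_right g.2

/-- The covolume of the lattice of integer points of `V` at which the form attached to `y` is at
most `p⁻ᵗ`. -/
noncomputable def covolAt (t : ℕ) (V : Submodule ℚ (ι → ℚ)) (y : ι → ℚ_[p]) : ℕ :=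
  covol (intPoints V ⊓ smallPoints t y)

lemma relIndex_inf_smallPoints_ne_zero (Λ : Submodule ℤ (ι → ℤ)) (t : ℕ) (y : ι → ℚ_[p]) :
    (Λ ⊓ smallPoints t y).toAddSubgroup.relIndex Λ.toAddSubgroup ≠ 0 := by
  rw [← Nat.cast_ne_zero (R := ℝ), relIndex_inf_smallPoints]
  positivity

lemma finrank_intPoints_inf_smallPoints (t : ℕ) (V : Submodule ℚ (ι → ℚ)) (y : ι → ℚ_[p]) :
    Module.finrank ℤ ↥(intPoints V ⊓ smallPoints t y) = Module.finrank ℚ V :=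
  (covol_eq_relIndex_mul inf_le_left (relIndex_inf_smallPoints_ne_zero _ t y)).1.trans
    (finrank_intPoints V)

lemma covolAt_eq (t : ℕ) (V : Submodule ℚ (ι → ℚ)) (y : ι → ℚ_[p]) :
    (covolAt t V y : ℝ) = covol (intPoints V) *
      max 1 (p ^ t * ‖fun i => linForm y (latticeMatrix (intPoints V) i)‖) := by
  rw [covolAt, (covol_eq_relIndex_mul inf_le_left (relIndex_inf_smallPoints_ne_zero _ t y)).2,
    Nat.cast_mul, relIndex_inf_smallPoints, mul_comm]

lemma covolAt_bot (t : ℕ) (y : ι → ℚ_[p]) : covolAt t ⊥ y = 1 := by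
  have h : intPoints (⊥ : Submodule ℚ (ι → ℚ)) = ⊥ :=
    LinearMap.ker_eq_bot.2 ratVec_injective
  rw [covolAt, h, bot_inf_eq, covol_bot]

lemma continuous_covolAt (t : ℕ) (V : Submodule ℚ (ι → ℚ)) :
    Continuous fun y : ι → ℚ_[p] => (covolAt t V y : ℝ) := by
  simp only [covolAt_eq, linForm_apply]
  fun_prop

lemma exists_norm_linForm_lt_of_covolAt_lt (t : ℕ) (V : Submodule ℚ (ι → ℚ)) (z : ι → ℚ_[p]) :
    ∃ q : ι → ℤ, ∀ ε ≤ 1, ∀ y : ι → ℚ_[p],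
      (covolAt t V y : ℝ) < ε * covolAt t V z → ‖linForm y q‖ < ε * ‖linForm z q‖ := by
  simp only [covolAt_eq]
  set Λ := intPoints V
  have hpt : (0 : ℝ) < p ^ t := by
    have := (Fact.out : p.Prime).pos
    positivity
  have hcovol : (0 : ℝ) < covol Λ := by exact_mod_cast Nat.pos_of_ne_zero (covol_ne_zero Λ)
  rcases le_or_gt (p ^ t * ‖fun i => linForm z (latticeMatrix Λ i)‖) 1 with hz | hz
  · refine ⟨0, fun ε hε y hy => absurd hy (not_lt.2 ?_)⟩
    rw [max_eq_left hz, mul_one]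
    exact (mul_le_of_le_one_left hcovol.le hε).trans
      (le_mul_of_one_le_right hcovol.le (le_max_left _ _))
  obtain ⟨i, hi⟩ := exists_norm_apply_eq_norm (pos_of_mul_pos_right (one_pos.trans hz) hpt.le)
  refine ⟨latticeMatrix Λ i, fun ε _ y hy => ?_⟩
  rw [max_eq_right hz.le, mul_left_comm, mul_lt_mul_iff_right₀ hcovol, mul_left_comm] at hy
  have hy' := lt_of_mul_lt_mul_left ((le_max_right _ _).trans_lt hy) hpt.le
  rw [← hi] at hy'
  exact (norm_le_pi_norm (fun i => linForm y (latticeMatrix Λ i)) i).trans_lt hy'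

lemma covolAt_sup_span_singleton_le {t : ℕ} {V : Submodule ℚ (ι → ℚ)} {y : ι → ℚ_[p]} {q : ι → ℤ}
    (hqV : ratVec q ∉ V) (hq : q ∈ smallPoints t y) :
    (covolAt t (V ⊔ ℚ ∙ ratVec q) y : ℝ) ≤ Fintype.card ι * ‖q‖ * covolAt t V y := by
  have hle : intPoints V ⊓ smallPoints t y ≤ intPoints (V ⊔ ℚ ∙ ratVec q) ⊓ smallPoints t y :=
    inf_le_inf_right _ (intPoints_mono le_sup_left)
  have hqW : q ∈ intPoints (V ⊔ ℚ ∙ ratVec q) ⊓ smallPoints t y :=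
    ⟨mem_intPoints.2 (le_sup_right (a := V) (Submodule.mem_span_singleton_self _)), hq⟩
  have hli (m : ℤ) (hm : m • q ∈ intPoints V ⊓ smallPoints t y) : m = 0 := by
    by_contra hm0
    have hmV : ratVec (m • q) ∈ V := hm.1
    rw [map_smul, ← Int.cast_smul_eq_zsmul ℚ,
      Submodule.smul_mem_iff _ (Int.cast_ne_zero (α := ℚ).2 hm0)] at hmV
    exact hqV hmV
  have hcard : Module.finrank ℚ ↥(V ⊔ ℚ ∙ ratVec q) ≤ Fintype.card ι :=
    (Submodule.finrank_le _).trans_eq (Module.finrank_fintype_fun_eq_card ℚ)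
  have h := covol_le_mul_of_mem hle (by
    rw [finrank_intPoints_inf_smallPoints, finrank_intPoints_inf_smallPoints,
      Submodule.finrank_sup_span_singleton hqV]) hqW hli
  rw [finrank_intPoints_inf_smallPoints] at h
  refine h.trans ?_
  gcongr
  rfl

lemma pow_le_covolAt {t : ℕ} {y : ι → ℚ_[p]} {δ : ℝ} (hδ : 0 ≤ δ)
    (h : ∀ q ∈ smallPoints t y, q ≠ 0 → δ ≤ ‖q‖) (V : Submodule ℚ (ι → ℚ)) :
    (δ / Fintype.card ι) ^ Module.finrank ℚ V ≤ covolAt t V y := by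
  rcases Nat.eq_zero_or_pos (Module.finrank ℚ V) with h0 | hpos
  · rw [Submodule.finrank_eq_zero.1 h0, covolAt_bot, finrank_bot, pow_zero, Nat.cast_one]
  have hcard : Module.finrank ℚ V ≤ Fintype.card ι :=
    (Submodule.finrank_le _).trans_eq (Module.finrank_fintype_fun_eq_card ℚ)
  calc (δ / Fintype.card ι) ^ Module.finrank ℚ V
      ≤ (δ / Module.finrank ℚ V) ^ Module.finrank ℚ V := by gcongr
    _ ≤ covolAt t V y := by
      rw [← finrank_intPoints_inf_smallPoints t V y]
      exact pow_le_covol_of_forall_le_norm hδ fun q hq => h q hq.2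

end SmallForms

section PadicBalls

variable {X : Type*}

/-- The closed ball of radius `p ^ (-k)`. Indexing by `k : ℕ` keeps track of the scale of a ball,
which its underlying set does not determine in an ultrametric space. -/
def padicBall [PseudoMetricSpace X] (x : X) (k : ℕ) : Set X :=
  closedBall x ((p : ℝ) ^ (-k : ℤ))

lemma padicBall_radius_pos (k : ℕ) : (0 : ℝ) < (p : ℝ) ^ (-k : ℤ) :=
  zpow_pos (mod_cast (Fact.out : p.Prime).pos) _

lemma mem_padicBall_self [PseudoMetricSpace X] (x : X) (k : ℕ) : x ∈ padicBall p x k :=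
  mem_closedBall_self (padicBall_radius_pos p k).le

lemma padicBall_anti [PseudoMetricSpace X] (x : X) : Antitone (padicBall p x) := fun k l hkl => by
  have : (1 : ℝ) ≤ p := mod_cast (Fact.out : p.Prime).one_le
  exact closedBall_subset_closedBall (by gcongr)

lemma exists_padicBall_radius_lt {r : ℝ} (hr : 0 < r) : ∃ k : ℕ, (p : ℝ) ^ (-k : ℤ) < r := by
  have hp : (1 : ℝ) < p := mod_cast (Fact.out : p.Prime).one_lt
  obtain ⟨k, hk⟩ := exists_pow_lt_of_lt_one hr (inv_lt_one_of_one_lt₀ hp)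
  exact ⟨k, by rwa [zpow_neg, zpow_natCast, ← inv_pow]⟩

section Ultrametric

variable [PseudoMetricSpace X] [IsUltrametricDist X]

lemma isOpen_padicBall (x : X) (k : ℕ) : IsOpen (padicBall p x k) :=
  IsUltrametricDist.isOpen_closedBall _ (padicBall_radius_pos p k).ne'

variable {p}

omit [Fact p.Prime] in
lemma padicBall_eq_of_mem {x y : X} {k : ℕ} (h : y ∈ padicBall p x k) :
    padicBall p y k = padicBall p x k :=
  (IsUltrametricDist.closedBall_eq_of_mem h).symm

lemma padicBall_subset_of_mem {x y : X} {k l : ℕ} (h : y ∈ padicBall p x k) (hkl : k ≤ l) :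
    padicBall p y l ⊆ padicBall p x k :=
  (padicBall_anti p y hkl).trans (padicBall_eq_of_mem h).subset

lemma exists_countable_disjoint_padicBall_cover [SecondCountableTopology X] {Z : Set X}
    {P : Set X → Prop} (h : ∀ x ∈ Z, ∃ k, P (padicBall p x k)) :
    ∃ F : Set (Set X), F.Countable ∧ F.PairwiseDisjoint id ∧ (∀ B ∈ F, IsOpen B ∧ P B) ∧
      Z ⊆ ⋃₀ F := by
  classical
  let rad (x : Z) : ℕ := Nat.find (h x x.2)
  let largest (x : Z) : Set X := padicBall p (x : X) (rad x)
  have eq_of_rad_le {x y : Z} {z : X} (hxy : rad x ≤ rad y) (hzx : z ∈ largest x)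
      (hzy : z ∈ largest y) : largest x = largest y := by
    have hball : padicBall p (y : X) (rad x) = largest x :=
      (padicBall_eq_of_mem (padicBall_anti p _ hxy hzy)).symm.trans (padicBall_eq_of_mem hzx)
    have hyx : rad y ≤ rad x :=
      Nat.find_min' (h y y.2) (by rw [hball]; exact Nat.find_spec (h x x.2))
    rw [← hball, hxy.antisymm hyx]
  have hdisj : (Set.range largest).PairwiseDisjoint id := by
    rintro _ ⟨x, rfl⟩ _ ⟨y, rfl⟩ hne
    refine Set.disjoint_left.mpr fun z hzx hzy => hne ?_
    rcases le_total (rad x) (rad y) with hxy | hyx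
    · exact eq_of_rad_le hxy hzx hzy
    · exact (eq_of_rad_le hyx hzy hzx).symm
  refine ⟨Set.range largest, hdisj.countable_of_isOpen ?_ ?_, hdisj, ?_, fun x hx =>
    ⟨_, ⟨⟨x, hx⟩, rfl⟩, mem_padicBall_self p x _⟩⟩
  · rintro _ ⟨x, rfl⟩
    exact isOpen_padicBall p _ _
  · rintro _ ⟨x, rfl⟩
    exact ⟨x, mem_padicBall_self p _ _⟩
  · rintro _ ⟨x, rfl⟩
    exact ⟨isOpen_padicBall p _ _, Nat.find_spec (h x x.2)⟩

lemma measure_le_mul_of_forall_exists_padicBall [SecondCountableTopology X] [MeasurableSpace X]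
    [OpensMeasurableSpace X] (μ : Measure X) {Z O : Set X} {c : ℝ≥0∞}
    (h : ∀ x ∈ Z, ∃ k, padicBall p x k ⊆ O ∧ μ (Z ∩ padicBall p x k) ≤ c * μ (padicBall p x k)) :
    μ Z ≤ c * μ O := by
  obtain ⟨F, hFc, hdisj, hF, hZ⟩ := exists_countable_disjoint_padicBall_cover
    (P := fun B => B ⊆ O ∧ μ (Z ∩ B) ≤ c * μ B) h
  calc μ Z ≤ μ (⋃ B ∈ F, Z ∩ B) := measure_mono fun x hx => by
        obtain ⟨B, hB, hxB⟩ := hZ hx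
        exact Set.mem_biUnion hB ⟨hx, hxB⟩
    _ ≤ ∑' B : F, μ (Z ∩ B) := measure_biUnion_le μ hFc _
    _ ≤ ∑' B : F, c * μ B := ENNReal.tsum_le_tsum fun B => (hF B B.2).2.2
    _ = c * μ (⋃ B ∈ F, B) := by
        rw [ENNReal.tsum_mul_left]
        exact congrArg _ (measure_biUnion hFc hdisj fun B hB => (hF B hB).1.measurableSet).symm
    _ ≤ c * μ O := by
        gcongr
        exact Set.iUnion₂_subset fun B hB => (hF B hB).2.1

end Ultrametric

section Doubling

open scoped Pointwise

variable {p} {E : Type*} [SeminormedAddCommGroup E]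

lemma smul_padicBall [NormedSpace ℚ_[p] E] (x : E) (k l : ℕ) :
    (p : ℚ_[p]) ^ k • padicBall p x l = padicBall p ((p : ℚ_[p]) ^ k • x) (k + l) := by
  have hp : (p : ℚ_[p]) ≠ 0 := mod_cast (Fact.out : p.Prime).ne_zero
  have hp' : (p : ℝ) ≠ 0 := mod_cast (Fact.out : p.Prime).ne_zero
  rw [padicBall, padicBall, smul_closedBall' (pow_ne_zero k hp), norm_pow, Padic.norm_p,
    Nat.cast_add, neg_add, zpow_add₀ hp', zpow_neg _ (k : ℤ), zpow_natCast, inv_pow]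

variable [NormedSpace ℚ_[p] E] [ProperSpace E] [MeasurableSpace E] [BorelSpace E] (μ : Measure E)
  [μ.IsAddLeftInvariant]

lemma exists_measure_padicBall_le_mul (j : ℕ) :
    ∃ D : ℕ, ∀ x k, μ (padicBall p x k) ≤ D * μ (padicBall p x (k + j)) := by
  obtain ⟨F, -, hF⟩ := (isCompact_closedBall (0 : E) ((p : ℝ) ^ (-(0 : ℕ) : ℤ))).elim_nhds_subcover
    (padicBall p · j) (fun x _ => closedBall_mem_nhds x (padicBall_radius_pos p j))
  have measure_padicBall (x : E) (k : ℕ) : μ (padicBall p x k) = μ (padicBall p 0 k) := by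
    rw [padicBall, ← measure_preimage_add μ x, preimage_add_closedBall, sub_self, padicBall]
  refine ⟨F.card, fun x k => ?_⟩
  have hcover : padicBall p (0 : E) k ⊆ ⋃ x ∈ F, padicBall p ((p : ℚ_[p]) ^ k • x) (k + j) := by
    have := Set.smul_set_mono (a := (p : ℚ_[p]) ^ k) hF
    rw [← padicBall] at this
    simpa only [Set.smul_set_iUnion₂, smul_padicBall, smul_zero, add_zero] using this
  calc μ (padicBall p x k) = μ (padicBall p 0 k) := measure_padicBall x k
    _ ≤ ∑ x ∈ F, μ (padicBall p ((p : ℚ_[p]) ^ k • x) (k + j)) :=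
        (measure_mono hcover).trans (measure_biUnion_finset_le _ _)
    _ = F.card * μ (padicBall p x (k + j)) := by
        simp only [measure_padicBall _ (k + j), Finset.sum_const, nsmul_eq_mul]

lemma exists_measure_padicBall_sdiff_le [IsUltrametricDist E] (j : ℕ) :
    ∃ η : ℝ≥0, 0 < η ∧ η < 1 ∧ ∀ x k, ∀ y ∈ padicBall p x k,
      μ (padicBall p x k \ padicBall p y (k + j)) ≤ η * μ (padicBall p x k) := by
  obtain ⟨D, hD⟩ := exists_measure_padicBall_le_mul (p := p) μ j
  refine ⟨(D + 1) / (D + 2), by positivity, (div_lt_one (by positivity)).mpr (by gcongr; norm_num),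
    fun x k y hy => ?_⟩
  set A := padicBall p x k
  set B := padicBall p y (k + j)
  have hBA : B ⊆ A := padicBall_subset_of_mem hy (Nat.le_add_right k j)
  have hA : μ (A \ B) ≤ (D + 1) * μ B :=
    calc μ (A \ B) ≤ μ A := measure_mono Set.sdiff_subset
      _ ≤ D * μ B := by simpa only [A, ← padicBall_eq_of_mem hy] using hD y k
      _ ≤ (D + 1) * μ B := by gcongr; exact le_self_add
  have hB : μ A = μ (A \ B) + μ B := by
    rw [← measure_inter_add_sdiff A (isOpen_padicBall p y _).measurableSet,
      Set.inter_eq_right.mpr hBA, add_comm]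
  rw [ENNReal.coe_div (by positivity), ENNReal.mul_comm_div, ← mul_div_assoc,
    ENNReal.le_div_iff_mul_le (by simp) (by simp)]
  push_cast
  calc μ (A \ B) * (D + 2) = (D + 1) * μ (A \ B) + μ (A \ B) := by ring
    _ ≤ (D + 1) * μ (A \ B) + (D + 1) * μ B := by gcongr
    _ = (D + 1) * μ A := by rw [hB, mul_add]

end Doubling

end PadicBalls

section NormingSets

variable {𝕜 F α : Type*} [NontriviallyNormedField 𝕜] [CompleteSpace 𝕜] [NormedAddCommGroup F]
  [NormedSpace 𝕜 F] [FiniteDimensional 𝕜 F]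

omit [CompleteSpace 𝕜] in
lemma exists_finset_forall_dual_apply_eq_zero (e : α → F) :
    ∃ s : Finset α, ∀ ℓ : StrongDual 𝕜 F, (∀ i ∈ s, ℓ (e i) = 0) → ∀ i, ℓ (e i) = 0 := by
  classical
  obtain ⟨t, ht, hspan⟩ := (Submodule.fg_span_iff_fg_span_finset_subset (R := 𝕜) (Set.range e)).mp
    (IsNoetherian.noetherian _)
  rw [← Set.image_univ, Finset.subset_set_image_iff] at ht
  obtain ⟨s, -, rfl⟩ := ht
  refine ⟨s, fun ℓ hℓ i => ?_⟩
  have hle : Submodule.span 𝕜 (Set.range e) ≤ LinearMap.ker (ℓ : F →ₗ[𝕜] 𝕜) := by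
    rw [hspan, Submodule.span_le, Finset.coe_image, Set.image_subset_iff]
    exact hℓ
  exact hle (Submodule.subset_span ⟨i, rfl⟩)

lemma exists_norming_finset [Nonempty α] (e : α → F) :
    ∃ (s : Finset α) (C : ℝ≥0), ∀ ℓ : StrongDual 𝕜 F, ∃ ℓ' : StrongDual 𝕜 F,
      (∀ i, ℓ' (e i) = ℓ (e i)) ∧ ∃ i ∈ s, ‖ℓ'‖ ≤ C * ‖ℓ' (e i)‖ := by
  classical
  obtain ⟨s, hs⟩ := exists_finset_forall_dual_apply_eq_zero (𝕜 := 𝕜) e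
  let eval : StrongDual 𝕜 F →ₗ[𝕜] s → 𝕜 :=
    LinearMap.pi fun i => (ContinuousLinearMap.apply 𝕜 𝕜 (e i) : StrongDual 𝕜 F →ₗ[𝕜] 𝕜)
  have eval_apply (ℓ : StrongDual 𝕜 F) (i : s) : eval ℓ i = ℓ (e i) := rfl
  have hker {ℓ : StrongDual 𝕜 F} (hℓ : ℓ ∈ LinearMap.ker eval) (i : α) : ℓ (e i) = 0 :=
    hs ℓ (fun i hi => congrFun hℓ ⟨i, hi⟩) i
  obtain ⟨W, hW⟩ := (LinearMap.ker eval).exists_isCompl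
  obtain ⟨C, -, hC⟩ := LinearMap.exists_antilipschitzWith (E := W) (F := s → 𝕜) (eval ∘ₗ W.subtype)
    (by rw [LinearMap.ker_comp, ← Submodule.disjoint_iff_comap_eq_bot]; exact hW.symm.disjoint)
  let i₀ : α := Classical.arbitrary α
  refine ⟨insert i₀ s, C, fun ℓ => ?_⟩
  obtain ⟨ℓ₀, hℓ₀, ℓ', hℓ', rfl⟩ :=
    Submodule.mem_sup.mp (hW.sup_eq_top ▸ Submodule.mem_top (x := ℓ))
  have hle : ‖ℓ'‖ ≤ C * ‖eval ℓ'‖ := hC.le_mul_norm (map_zero _) (⟨ℓ', hℓ'⟩ : W)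
  refine ⟨ℓ', fun i => by simp [hker hℓ₀ i], ?_⟩
  rcases (norm_nonneg (eval ℓ')).eq_or_lt with h0 | hpos
  · refine ⟨i₀, Finset.mem_insert_self _ _, hle.trans ?_⟩
    rw [← h0, mul_zero]
    positivity
  · obtain ⟨i, hi⟩ := exists_norm_apply_eq_norm hpos
    exact ⟨i, Finset.mem_insert_of_mem i.2, by rwa [← eval_apply, hi]⟩

end NormingSets

section HomogeneousExpansions

variable {𝕜 E F : Type*} [NontriviallyNormedField 𝕜] [SeminormedAddCommGroup E] [NormedSpace 𝕜 E]
  [NormedAddCommGroup F] [NormedSpace 𝕜 F]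

variable (𝕜) in
/-- `q` expands `g` on the closed ball of radius `ρ` about `0` as a series of functions `q k`
homogeneous of degree `k`. -/
structure HasHomogeneousExpansion (q : ℕ → E → F) (g : E → F) (ρ : ℝ) : Prop where
  map_smul (k : ℕ) (c : 𝕜) (h : E) : q k (c • h) = c ^ k • q k h
  hasSum {h : E} (hh : ‖h‖ ≤ ρ) : HasSum (q · h) (g h)

/-- Up to normalization, the series `q` is dominated by the geometric series of ratio `R ‖h‖`, and
one of its terms of degree at most `m` has size at least `B⁻¹` on the unit ball. -/
def IsControlled (R B : ℝ) (m : ℕ) (q : ℕ → E → F) : Prop :=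
  ∃ s : ℝ, (∀ k h, ‖q k h‖ ≤ s * (R * ‖h‖) ^ k) ∧ ∃ k ≤ m, ∃ h, ‖h‖ ≤ 1 ∧ s ≤ B * ‖q k h‖

lemma exists_norm_le_mul_norm_vandermonde_mulVec [CompleteSpace 𝕜] {m : ℕ} {v : Fin m → 𝕜}
    (hv : Function.Injective v) :
    ∃ C : ℝ, 1 ≤ C ∧ ∀ c, ‖c‖ ≤ C * ‖(Matrix.vandermonde v).mulVec c‖ := by
  have hinj : Function.Injective (Matrix.vandermonde v).mulVecLin :=
    Matrix.mulVec_injective_of_isUnit <| (Matrix.isUnit_iff_isUnit_det _).mpr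
      (isUnit_iff_ne_zero.mpr (Matrix.det_vandermonde_ne_zero_iff.mpr hv))
  obtain ⟨C, -, hC⟩ := LinearMap.exists_antilipschitzWith _ (LinearMap.ker_eq_bot.mpr hinj)
  refine ⟨max 1 C, le_max_left _ _, fun c => ?_⟩
  calc ‖c‖ ≤ C * ‖(Matrix.vandermonde v).mulVec c‖ := hC.le_mul_norm (map_zero _) c
    _ ≤ max 1 C * ‖(Matrix.vandermonde v).mulVec c‖ := by gcongr; exact le_max_right _ _

namespace HasHomogeneousExpansion

lemma norm_sub_apply_zero_le [IsUltrametricDist F] {q : ℕ → E → F} {g : E → F} {ρ B : ℝ}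
    (hq : HasHomogeneousExpansion 𝕜 q g ρ) (hB : ∀ k h, ‖h‖ ≤ ρ → ‖q k h‖ ≤ B) {c : 𝕜}
    (hc : ‖c‖ ≤ 1) {h : E} (hh : ‖h‖ ≤ ρ) : ‖g (c • h) - g 0‖ ≤ ‖c‖ * B := by
  have hB0 : 0 ≤ B := (norm_nonneg _).trans (hB 0 h hh)
  have hch : ‖c • h‖ ≤ ρ :=
    (norm_smul_le c h).trans ((mul_le_of_le_one_left (norm_nonneg h) hc).trans hh)
  have hg0 : g 0 = q 0 (c • h) := by
    have hterm (k : ℕ) : q k 0 = (0 : 𝕜) ^ k • q k (c • h) := by rw [← hq.map_smul, zero_smul]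
    refine (hq.hasSum (by rw [norm_zero]; exact (norm_nonneg h).trans hh)).unique ?_
    have hsum := hasSum_single (f := (q · 0)) 0 fun k hk => by
      simp only [hterm k, zero_pow hk, zero_smul]
    simpa only [hterm 0, pow_zero, one_smul] using hsum
  have htail := (hasSum_nat_add_iff' 1).mpr (hq.hasSum hch)
  rw [Finset.sum_range_one, ← hg0] at htail
  rw [← htail.tsum_eq]
  refine IsUltrametricDist.norm_tsum_le_of_forall_le_of_nonneg (by positivity) fun k => ?_
  rw [hq.map_smul, norm_smul, norm_pow]
  exact mul_le_mul (pow_le_of_le_one (norm_nonneg c) hc k.succ_ne_zero) (hB _ h hh)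
    (norm_nonneg _) (norm_nonneg _)

variable [IsUltrametricDist 𝕜] [CompleteSpace 𝕜] {ϖ : 𝕜} (hϖ₀ : ϖ ≠ 0) (hϖ₁ : ‖ϖ‖ < 1)
include hϖ₀ hϖ₁

lemma exists_norm_le_mul_max (m : ℕ) :
    ∃ C : ℝ, 1 ≤ C ∧ ∀ {q : ℕ → E → 𝕜} {g : E → 𝕜} {ρ τ M : ℝ},
      HasHomogeneousExpansion 𝕜 q g ρ → (∀ k h, m < k → ‖h‖ ≤ ρ → ‖q k h‖ ≤ τ) →
      (∀ h, ‖h‖ ≤ ‖ϖ‖ * ρ → ‖g h‖ ≤ M) → ∀ k ≤ m, ∀ h, ‖h‖ ≤ ρ → ‖q k h‖ ≤ C * max M τ := by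
  let node (i : Fin (m + 1)) : 𝕜 := ϖ ^ (i + 1 : ℕ)
  have hnode : Function.Injective node := fun i j hij => Fin.ext <| Nat.succ_injective <|
    pow_right_injective₀ (norm_pos_iff.mpr hϖ₀) hϖ₁.ne (by simpa [node] using congrArg norm hij)
  obtain ⟨C, hC1, hC⟩ := exists_norm_le_mul_norm_vandermonde_mulVec hnode
  refine ⟨C, hC1, fun {q g ρ τ M} hq hτ hM k hk h hh => ?_⟩
  have hτ0 : 0 ≤ τ := (norm_nonneg _).trans (hτ _ h m.lt_succ_self hh)
  let coeff (k : Fin (m + 1)) : 𝕜 := q k h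
  have hV : ‖(Matrix.vandermonde node).mulVec coeff‖ ≤ max M τ := by
    refine (pi_norm_le_iff_of_nonneg (le_max_of_le_right hτ0)).mpr fun i => ?_
    have hle : ‖node i • h‖ ≤ ‖ϖ‖ * ρ := by
      rw [norm_smul, norm_pow]
      gcongr
      exact pow_le_of_le_one (norm_nonneg ϖ) hϖ₁.le (Nat.succ_ne_zero _)
    have hle' : ‖node i • h‖ ≤ ρ :=
      hle.trans (mul_le_of_le_one_left ((norm_nonneg h).trans hh) hϖ₁.le)
    have htail := (hasSum_nat_add_iff' (m + 1)).mpr (hq.hasSum hle')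
    have hsum : (Matrix.vandermonde node).mulVec coeff i
        = g (node i • h) + -(g (node i • h) - ∑ k ∈ Finset.range (m + 1), q k (node i • h)) := by
      rw [neg_sub, add_sub_cancel, Finset.sum_range]
      exact Fintype.sum_congr _ _ fun k : Fin (m + 1) => (hq.map_smul k (node i) h).symm
    rw [hsum]
    refine (IsUltrametricDist.norm_add_le_max _ _).trans (max_le_max (hM _ hle) ?_)
    rw [norm_neg, ← htail.tsum_eq]
    exact IsUltrametricDist.norm_tsum_le_of_forall_le_of_nonneg hτ0 fun k =>
      hτ _ _ (by lia) hle'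
  calc ‖q k h‖ ≤ ‖coeff‖ := norm_le_pi_norm coeff ⟨k, Nat.lt_succ_of_le hk⟩
    _ ≤ C * ‖(Matrix.vandermonde node).mulVec coeff‖ := hC coeff
    _ ≤ C * max M τ := by gcongr

lemma exists_norm_le_of_dominant_term (m : ℕ) :
    ∃ C : ℝ, 1 ≤ C ∧ ∀ {q : ℕ → E → 𝕜} {g : E → 𝕜} {ρ τ M : ℝ},
      HasHomogeneousExpansion 𝕜 q g ρ → (∀ k h, m < k → ‖h‖ ≤ ρ → ‖q k h‖ ≤ τ) →
      (∃ k ≤ m, ∃ h, ‖h‖ ≤ ρ ∧ 2 * C * τ ≤ ‖q k h‖) → (∀ h, ‖h‖ ≤ ‖ϖ‖ * ρ → ‖g h‖ ≤ M) →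
      ∀ k h, ‖h‖ ≤ ρ → ‖q k h‖ ≤ C * M := by
  obtain ⟨C, hC1, hC⟩ := exists_norm_le_mul_max (E := E) hϖ₀ hϖ₁ m
  refine ⟨C, hC1, fun {q g ρ τ M} hq hτ hbig hM => ?_⟩
  obtain ⟨k₁, hk₁, h₁, hh₁, hlt⟩ := hbig
  have hM0 : 0 ≤ M := (norm_nonneg _).trans <| hM (ϖ • h₁) <| by
    rw [norm_smul]
    gcongr
  have hτM : τ ≤ M := by
    have h2 : 2 * τ ≤ max M τ := le_of_mul_le_mul_left
      (by linarith [hC hq hτ hM k₁ hk₁ h₁ hh₁]) (zero_lt_one.trans_le hC1)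
    rcases le_max_iff.mp h2 with h | h <;> linarith
  intro k h hh
  rcases le_or_gt k m with hk | hk
  · simpa only [max_eq_left hτM] using hC hq hτ hM k hk h hh
  · exact (hτ k h hk hh).trans (hτM.trans (le_mul_of_one_le_left hM0 hC1))

lemma exists_norm_sub_le_of_isControlled {R B : ℝ} (hR : 0 ≤ R) (hB : 0 ≤ B) (m : ℕ) :
    ∃ C : ℝ, 1 ≤ C ∧ ∃ ρ₀ : ℝ, 0 < ρ₀ ∧ ∀ {q : ℕ → E → 𝕜} {g : E → 𝕜} {M : ℝ} {b : 𝕜},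
      HasHomogeneousExpansion 𝕜 q g ‖b‖ → IsControlled R B m q → ‖b‖ ≤ ρ₀ →
      (∀ h, ‖h‖ ≤ ‖ϖ‖ * ‖b‖ → ‖g h‖ ≤ M) →
      ∀ c : 𝕜, ‖c‖ ≤ 1 → ∀ h, ‖h‖ ≤ ‖b‖ → ‖g (c • h) - g 0‖ ≤ ‖c‖ * (C * M) := by
  obtain ⟨C, hC1, hC⟩ := exists_norm_le_of_dominant_term (E := E) hϖ₀ hϖ₁ m
  refine ⟨C, hC1, (1 + R + 2 * C * B * R ^ (m + 1))⁻¹, by positivity,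
    fun {q g M b} hq hctl hb hM c hc h hh => hq.norm_sub_apply_zero_le ?_ hc hh⟩
  obtain ⟨s, hs, k₁, hk₁, h₁, hh₁, hsB⟩ := hctl
  have hs0 : 0 ≤ s := by simpa using (norm_nonneg _).trans (hs 0 0)
  have hsmall : (1 + R + 2 * C * B * R ^ (m + 1)) * ‖b‖ ≤ 1 := by
    rwa [← one_div, le_div_iff₀' (by positivity)] at hb
  have hconst : 0 ≤ 2 * C * B * R ^ (m + 1) := by positivity
  have hb1 : ‖b‖ ≤ 1 := by nlinarith [norm_nonneg b]
  have hRb : R * ‖b‖ ≤ 1 := by nlinarith [norm_nonneg b]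
  refine hC (τ := s * (R * ‖b‖) ^ (m + 1)) hq (fun k h hk hh => ?_)
    ⟨k₁, hk₁, b • h₁, ?_, ?_⟩ hM
  · calc ‖q k h‖ ≤ s * (R * ‖h‖) ^ k := hs k h
      _ ≤ s * (R * ‖b‖) ^ k := by gcongr
      _ ≤ s * (R * ‖b‖) ^ (m + 1) := by gcongr 1; exact pow_le_pow_of_le_one (by positivity) hRb hk
  · rw [norm_smul]
    exact mul_le_of_le_one_right (norm_nonneg b) hh₁
  · rw [hq.map_smul, norm_smul, norm_pow]
    calc 2 * C * (s * (R * ‖b‖) ^ (m + 1))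
        ≤ 2 * C * (B * ‖q k₁ h₁‖ * (R * ‖b‖) ^ (m + 1)) := by gcongr
      _ = (2 * C * B * R ^ (m + 1) * ‖b‖) * (‖b‖ ^ m * ‖q k₁ h₁‖) := by ring
      _ ≤ 1 * (‖b‖ ^ k₁ * ‖q k₁ h₁‖) := by
        gcongr ?_ * (?_ * _)
        · nlinarith [norm_nonneg b]
        · exact pow_le_pow_of_le_one (norm_nonneg b) hb1 hk₁
      _ = _ := one_mul _

end HasHomogeneousExpansion

end HomogeneousExpansions

section AnalyticExpansions

variable {𝕜 E F : Type*} [NontriviallyNormedField 𝕜] [NormedAddCommGroup E] [NormedSpace 𝕜 E]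
  [NormedAddCommGroup F] [NormedSpace 𝕜 F] [CompleteSpace F]

lemma tsum_sigma_mk_le_tsum {ι : Type*} {β : ι → Type*} {g : (Σ i, β i) → ℝ≥0} (hg : Summable g)
    (i : ι) : ∑' b, g ⟨i, b⟩ ≤ ∑' x, g x :=
  NNReal.tsum_comp_le_tsum_of_inj hg sigma_mk_injective

omit [CompleteSpace F] in
lemma exists_nnnorm_changeOrigin_mul_pow_le (P : FormalMultilinearSeries 𝕜 E F) {r r' : ℝ≥0}
    (hr : (r + r' : ℝ≥0∞) < P.radius) :
    ∃ A : ℝ≥0, ∀ y : E, ‖y‖₊ ≤ r → ∀ k, ‖P.changeOrigin y k‖₊ * r' ^ k ≤ A := by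
  have hsum := P.changeOriginSeries_summable_aux₁ hr
  refine ⟨∑' s : Σ k l : ℕ, {s : Finset (Fin (k + l)) // s.card = l},
    ‖P (s.1 + s.2.1)‖₊ * r ^ s.2.1 * r' ^ s.1, fun y hy k => ?_⟩
  have hyP : (‖y‖₊ : ℝ≥0∞) < P.radius :=
    ((ENNReal.coe_le_coe.mpr hy).trans le_self_add).trans_lt hr
  have hsum_k := (NNReal.summable_sigma.mp hsum).1 k
  calc ‖P.changeOrigin y k‖₊ * r' ^ k
      ≤ (∑' s : Σ l : ℕ, {s : Finset (Fin (k + l)) // s.card = l},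
          ‖P (k + s.1)‖₊ * ‖y‖₊ ^ s.1) * r' ^ k := by gcongr; exact P.nnnorm_changeOrigin_le k hyP
    _ = ∑' s : Σ l : ℕ, {s : Finset (Fin (k + l)) // s.card = l},
          ‖P (k + s.1)‖₊ * ‖y‖₊ ^ s.1 * r' ^ k := (NNReal.tsum_mul_right _ _).symm
    _ ≤ ∑' s : Σ l : ℕ, {s : Finset (Fin (k + l)) // s.card = l},
          ‖P (k + s.1)‖₊ * r ^ s.1 * r' ^ k :=
        Summable.tsum_le_tsum (fun s => by gcongr)
          (NNReal.summable_of_le (fun s => by gcongr) hsum_k) hsum_k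
    _ ≤ _ := tsum_sigma_mk_le_tsum hsum k

lemma exists_hasHomogeneousExpansion_family {f : E → F} {x₀ : E} (hf : AnalyticAt 𝕜 f x₀) :
    ∃ (Q : E → ℕ → E → F) (ρ A : ℝ≥0), 0 < ρ ∧
      (∀ y, ‖y‖ ≤ ρ → HasHomogeneousExpansion 𝕜 (Q y) (fun h => f (x₀ + y + h)) ρ) ∧
      (∀ y, ‖y‖ ≤ ρ → ∀ k h, ‖Q y k h‖ ≤ A * ((ρ : ℝ)⁻¹ * ‖h‖) ^ k) ∧
      ∀ k h, ContinuousAt (Q · k h) 0 := by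
  obtain ⟨P, r, hP⟩ := hf
  obtain ⟨r₁, hr₁, hr₁r⟩ := ENNReal.lt_iff_exists_nnreal_btwn.mp hP.r_pos
  have hr₁_pos : 0 < r₁ := by exact_mod_cast hr₁
  set ρ : ℝ≥0 := r₁ / 2 with hρ
  have hρ_pos : 0 < ρ := half_pos hr₁_pos
  have hρr : (ρ + ρ : ℝ≥0∞) < r := by rwa [← ENNReal.coe_add, hρ, add_halves]
  obtain ⟨A, hA⟩ := exists_nnnorm_changeOrigin_mul_pow_le P (hρr.trans_le hP.r_le)
  refine ⟨fun y k h => P.changeOrigin y k fun _ => h, ρ, A, hρ_pos, fun y hy => ⟨fun k c h => ?_,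
    fun {h} hh => ?_⟩, fun y hy k h => ?_, fun k h => ?_⟩
  · simpa using (P.changeOrigin y k).map_smul_univ (fun _ => c) (fun _ => h)
  · have hy' : (‖y‖₊ : ℝ≥0∞) ≤ ρ := ENNReal.coe_le_coe.mpr hy
    have hh' : (‖h‖₊ : ℝ≥0∞) ≤ ρ := ENNReal.coe_le_coe.mpr hh
    refine (hP.changeOrigin ((hy'.trans le_self_add).trans_lt hρr)).hasSum ?_
    rw [Metric.mem_eball, edist_zero_right, enorm_eq_nnnorm, lt_tsub_iff_right]
    exact (add_le_add hh' hy').trans_lt hρr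
  · calc ‖P.changeOrigin y k fun _ => h‖ ≤ ‖P.changeOrigin y k‖ * ‖h‖ ^ k := by
          simpa using (P.changeOrigin y k).le_opNorm fun _ => h
      _ = ‖P.changeOrigin y k‖ * ρ ^ k * ((ρ : ℝ)⁻¹ * ‖h‖) ^ k := by
          rw [mul_assoc, ← mul_pow, mul_inv_cancel_left₀ (by positivity)]
      _ ≤ A * ((ρ : ℝ)⁻¹ * ‖h‖) ^ k := by gcongr; exact hA y hy k
  · exact (continuous_eval_const fun _ => h).continuousAt.comp
      (P.analyticAt_changeOrigin hP.radius_pos k).continuousAt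

omit [CompleteSpace F] in
lemma HasHomogeneousExpansion.dual_comp {q : ℕ → E → F} {g : E → F} {ρ : ℝ}
    (hq : HasHomogeneousExpansion 𝕜 q g ρ) (ℓ : StrongDual 𝕜 F) :
    HasHomogeneousExpansion 𝕜 (fun k h => ℓ (q k h)) (fun h => ℓ (g h)) ρ where
  map_smul k c h := by simp only [hq.map_smul k c h, _root_.map_smul]
  hasSum hh := ℓ.hasSum (hq.hasSum hh)

omit [CompleteSpace F] in
lemma HasHomogeneousExpansion.dual_apply_eq {q : ℕ → E → F} {g : E → F} {ρ : ℝ}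
    (hq : HasHomogeneousExpansion 𝕜 q g ρ) {ℓ ℓ' : StrongDual 𝕜 F} {h : E} (hh : ‖h‖ ≤ ρ)
    (heq : ∀ k, ℓ (q k h) = ℓ' (q k h)) : ℓ (g h) = ℓ' (g h) := by
  refine (ℓ.hasSum (hq.hasSum hh)).unique ?_
  simpa only [heq] using ℓ'.hasSum (hq.hasSum hh)

omit [CompleteSpace F] in
lemma norm_dual_le_two_mul_of_norm_sub_le {ℓ : StrongDual 𝕜 F} {C : ℝ} {v w : F}
    (h : ‖ℓ‖ ≤ C * ‖ℓ v‖) (hC : 0 ≤ C) (hvw : 2 * C * ‖v - w‖ ≤ 1) : ‖ℓ‖ ≤ 2 * C * ‖ℓ w‖ := by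
  have hv : ‖ℓ v‖ ≤ ‖ℓ w‖ + ‖ℓ‖ * ‖v - w‖ := by
    calc ‖ℓ v‖ = ‖ℓ w + ℓ (v - w)‖ := by rw [map_sub, add_sub_cancel]
      _ ≤ ‖ℓ w‖ + ‖ℓ‖ * ‖v - w‖ := norm_add_le_of_le le_rfl (ℓ.le_opNorm _)
  nlinarith [norm_nonneg ℓ]

variable [CompleteSpace 𝕜] [FiniteDimensional 𝕜 F]

omit [CompleteSpace F] in
lemma exists_isControlled_expansion_dual_comp {f : E → F} {x₀ : E} (hf : AnalyticAt 𝕜 f x₀) :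
    ∃ ρ > 0, ∃ R ≥ 0, ∃ B ≥ 0, ∃ m : ℕ, ∀ (ℓ : StrongDual 𝕜 F) (y : E), ‖y‖ ≤ ρ →
      ∃ q, HasHomogeneousExpansion 𝕜 q (fun h => ℓ (f (x₀ + y + h))) ρ ∧ IsControlled R B m q := by
  have := FiniteDimensional.complete 𝕜 F
  obtain ⟨Q, ρ₁, A, hρ₁, hQ, hQA, hcont⟩ := exists_hasHomogeneousExpansion_family hf
  let e (i : ℕ × closedBall (0 : E) 1) : F := Q 0 i.1 i.2
  have : Nonempty (closedBall (0 : E) 1) := ⟨0, by simp⟩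
  obtain ⟨s, C, hs⟩ := exists_norming_finset (𝕜 := 𝕜) e
  have hnear : ∀ᶠ y in nhds 0, ∀ i ∈ s, 2 * C * ‖e i - Q y i.1 i.2‖ ≤ 1 := by
    refine (Finset.eventually_all s).mpr fun i _ => ?_
    have hlim : ContinuousAt (fun y => 2 * C * ‖e i - Q y i.1 i.2‖) 0 :=
      continuousAt_const.mul (continuousAt_const.sub (hcont i.1 i.2)).norm
    exact hlim.eventually_le_const (by simp [e])
  obtain ⟨δ, hδ, hball⟩ := Metric.nhds_basis_closedBall.eventually_iff.mp hnear
  obtain ⟨ρ, hρ, hρδ, hρρ₁, hρ1⟩ : ∃ ρ : ℝ, 0 < ρ ∧ ρ ≤ δ ∧ ρ ≤ ρ₁ / 2 ∧ ρ ≤ 1 / 2 :=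
    ⟨min δ (min (ρ₁ / 2) (1 / 2)), by positivity, by simp, by simp, by simp⟩
  refine ⟨ρ, hρ, (ρ₁ : ℝ)⁻¹, by positivity, A * (2 * C), by positivity, s.sup Prod.fst,
    fun ℓ y hy => ?_⟩
  have hyρ₁ : ‖y‖ ≤ ρ₁ := by linarith
  obtain ⟨ℓ', hℓ', i, hi, hnorm⟩ := hs ℓ
  have hcongr {h : E} (hh : ‖h‖ ≤ ρ) : ℓ' (f (x₀ + y + h)) = ℓ (f (x₀ + y + h)) := by
    have hyh₁ : ‖y + h‖ ≤ ρ₁ := (norm_add_le_of_le hy hh).trans (by linarith)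
    have hyh₂ : ‖y + h‖ ≤ 1 := (norm_add_le_of_le hy hh).trans (by linarith)
    simpa only [add_zero, ← add_assoc] using
      (hQ 0 (by simp)).dual_apply_eq hyh₁ fun k =>
        hℓ' (k, ⟨y + h, mem_closedBall_zero_iff.mpr hyh₂⟩)
  have hexp := (hQ y hyρ₁).dual_comp ℓ'
  refine ⟨fun k h => ℓ' (Q y k h), ⟨hexp.map_smul, fun hh => ?_⟩, A * ‖ℓ'‖, fun k h => ?_, i.1,
    Finset.le_sup (f := Prod.fst) hi, i.2, mem_closedBall_zero_iff.mp i.2.2, ?_⟩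
  · rw [← hcongr hh]
    exact hexp.hasSum (by linarith)
  · calc ‖ℓ' (Q y k h)‖ ≤ ‖ℓ'‖ * (A * ((ρ₁ : ℝ)⁻¹ * ‖h‖) ^ k) :=
          ℓ'.le_opNorm_of_le (hQA y hyρ₁ k h)
      _ = A * ‖ℓ'‖ * ((ρ₁ : ℝ)⁻¹ * ‖h‖) ^ k := by ring
  · rw [mul_assoc]
    gcongr
    exact norm_dual_le_two_mul_of_norm_sub_le hnorm C.2 <|
      hball (mem_closedBall_zero_iff.mpr (hy.trans hρδ)) i hi

end AnalyticExpansions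

section Goodness

variable {X V : Type*} [PseudoMetricSpace X] [SeminormedAddCommGroup V]

/-- A Bernstein (Markov) type inequality on the sub-balls of the ball of centre `x₀` and radius
`p ^ (-k₀)`: the bound `M` for `g` on a ball controls the variation of `g` on the ball of `p` times
the radius. -/
def HasBernsteinBound (x₀ : X) (k₀ : ℕ) (C : ℝ) (g : X → V) : Prop :=
  ∀ x ∈ padicBall p x₀ k₀, ∀ K ≥ k₀, ∀ M, (∀ z ∈ padicBall p x (K + 1), ‖g z‖ ≤ M) →
    ∀ j, ∀ z ∈ padicBall p x (K + j), ‖g z - g x‖ ≤ (p : ℝ) ^ (-j : ℤ) * (C * M)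

/-- Within every sub-ball, the values of `g` stay comparable, up to the factor `θ`, on each ball
`J` scales smaller, and reach every given value on the whole of some ball `J` scales smaller. -/
structure SpreadsOn (x₀ : X) (k₀ : ℕ) (θ : ℝ) (J : ℕ) (g : X → ℝ) : Prop where
  exists_le {x : X} (hx : x ∈ padicBall p x₀ k₀) {K : ℕ} (hK : k₀ ≤ K) {z : X}
    (hz : z ∈ padicBall p x K) : ∃ w ∈ padicBall p x (K + J), θ * g z ≤ g w
  exists_forall_le {x : X} (hx : x ∈ padicBall p x₀ k₀) {K : ℕ} (hK : k₀ ≤ K) :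
    ∃ y ∈ padicBall p x K, ∀ w ∈ padicBall p y (K + J), g x ≤ g w

/-- A `(C, α)`-good function on the sub-balls of a ball. Every point of an ultrametric ball is a
centre, so comparing `g` with its value at the centre amounts to comparing it with its supremum. -/
def IsGoodOnBalls [MeasurableSpace X] (μ : Measure X) (x₀ : X) (k₀ : ℕ) (C α : ℝ) (g : X → ℝ) :
    Prop :=
  ∀ z ∈ padicBall p x₀ k₀, ∀ K ≥ k₀, ∀ ε : ℝ, 0 < ε → ε ≤ 1 →
    μ {x ∈ padicBall p z K | g x < ε * g z} ≤ ENNReal.ofReal (C * ε ^ α) * μ (padicBall p z K)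

variable {p} {x₀ : X} {k₀ : ℕ}

section Analytic

variable {E F : Type*} [NormedAddCommGroup E] [NormedSpace ℚ_[p] E] [NormedAddCommGroup F]
  [NormedSpace ℚ_[p] F] [FiniteDimensional ℚ_[p] F]

lemma exists_hasBernsteinBound_dual_comp {f : E → F} {x₀ : E} (hf : AnalyticAt ℚ_[p] f x₀) :
    ∃ (k₀ : ℕ) (C : ℝ), 1 ≤ C ∧ ContinuousOn f (padicBall p x₀ k₀) ∧
      ∀ ℓ : StrongDual ℚ_[p] F, HasBernsteinBound p x₀ k₀ C (fun x => ℓ (f x)) := by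
  have := FiniteDimensional.complete ℚ_[p] F
  have hp : (p : ℚ_[p]) ≠ 0 := mod_cast (Fact.out : p.Prime).ne_zero
  obtain ⟨ρ, hρ, R, hR, B, hB, m, hexp⟩ := exists_isControlled_expansion_dual_comp hf
  obtain ⟨C, hC, ρ₀, hρ₀, hbound⟩ := HasHomogeneousExpansion.exists_norm_sub_le_of_isControlled
    (E := E) hp Padic.norm_p_lt_one hR hB m
  obtain ⟨δ, hδ, hcont⟩ := hf.exists_ball_analyticOnNhd
  obtain ⟨k₀, hk₀⟩ := exists_padicBall_radius_lt p (lt_min hδ (lt_min hρ hρ₀))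
  obtain ⟨hk₀δ, hk₀ρ, hk₀ρ₀⟩ : (p : ℝ) ^ (-k₀ : ℤ) < δ ∧ (p : ℝ) ^ (-k₀ : ℤ) < ρ ∧
    (p : ℝ) ^ (-k₀ : ℤ) < ρ₀ := by simpa only [lt_min_iff] using hk₀
  refine ⟨k₀, C, hC, hcont.continuousOn.mono (closedBall_subset_ball hk₀δ),
    fun ℓ x hx K hK M hM j z hz => ?_⟩
  have hnorm (k : ℕ) : ‖(p : ℚ_[p]) ^ k‖ = (p : ℝ) ^ (-k : ℤ) := Padic.norm_p_pow k
  have hK' : ‖(p : ℚ_[p]) ^ K‖ ≤ (p : ℝ) ^ (-k₀ : ℤ) := by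
    rw [hnorm]
    have := (Fact.out : p.Prime).one_le
    gcongr
    exact_mod_cast this
  obtain ⟨q, hq, hctl⟩ := hexp ℓ (x - x₀) ((mem_closedBall_iff_norm.mp hx).trans hk₀ρ.le)
  rw [add_sub_cancel] at hq
  have hvar := hbound (b := (p : ℚ_[p]) ^ K) (M := M)
    ⟨hq.map_smul, fun hh => hq.hasSum (hh.trans (hK'.trans hk₀ρ.le))⟩ hctl (hK'.trans hk₀ρ₀.le)
    (fun h hh => hM _ ?_) ((p : ℚ_[p]) ^ j) ?_ (((p : ℚ_[p]) ^ j)⁻¹ • (z - x)) ?_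
  · simpa only [smul_inv_smul₀ (pow_ne_zero j hp), add_sub_cancel, add_zero, hnorm] using hvar
  · rwa [← norm_mul, ← pow_succ', hnorm, ← add_sub_cancel_left x h, ← mem_closedBall_iff_norm] at hh
  · exact (norm_pow_le _ j).trans (pow_le_one₀ (norm_nonneg _) Padic.norm_p_lt_one.le)
  · rw [norm_smul, norm_inv, inv_mul_le_iff₀ (norm_pos_iff.mpr (pow_ne_zero j hp)), ← norm_mul,
      ← pow_add, hnorm, add_comm, ← mem_closedBall_iff_norm]
    exact hz

end Analytic

namespace HasBernsteinBound

variable [IsUltrametricDist V] {C : ℝ} {g : X → V}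
  (hg : HasBernsteinBound p x₀ k₀ C g)
include hg

lemma norm_le_mul (hC : 1 ≤ C) {x : X} (hx : x ∈ padicBall p x₀ k₀) {K : ℕ} (hK : k₀ ≤ K) {z : X}
    (hz : z ∈ padicBall p x K) {M : ℝ} (hM : ∀ w ∈ padicBall p x (K + 1), ‖g w‖ ≤ M) :
    ‖g z‖ ≤ C * M := by
  have hdiff : ‖g z - g x‖ ≤ C * M := by simpa using hg x hx K hK M hM 0 z hz
  have hxM : ‖g x‖ ≤ M := hM x (mem_padicBall_self p x _)
  have hxC : ‖g x‖ ≤ C * M := hxM.trans (le_mul_of_one_le_left ((norm_nonneg _).trans hxM) hC)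
  simpa only [sub_add_cancel] using
    (IsUltrametricDist.norm_add_le_max (g z - g x) (g x)).trans (max_le hdiff hxC)

variable [IsUltrametricDist X] [ProperSpace X] (hcont : ContinuousOn g (padicBall p x₀ k₀))
include hcont

omit hg [IsUltrametricDist V] in
lemma exists_forall_norm_le {x : X} (hx : x ∈ padicBall p x₀ k₀) {K : ℕ} (hK : k₀ ≤ K) :
    ∃ w ∈ padicBall p x K, ∀ z ∈ padicBall p x K, ‖g z‖ ≤ ‖g w‖ :=
  (isCompact_closedBall x _).exists_isMaxOn ⟨x, mem_padicBall_self p x K⟩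
    (hcont.mono (padicBall_subset_of_mem hx hK)).norm

lemma exists_norm_le_pow_mul (hC : 1 ≤ C) {x : X} (hx : x ∈ padicBall p x₀ k₀) {K : ℕ}
    (hK : k₀ ≤ K) {z : X} (hz : z ∈ padicBall p x K) (J : ℕ) :
    ∃ w ∈ padicBall p x (K + J), ‖g z‖ ≤ C ^ J * ‖g w‖ := by
  induction J with
  | zero => exact ⟨z, hz, by simp⟩
  | succ J ih =>
    obtain ⟨w, hw, hzw⟩ := ih
    obtain ⟨w', hw', hmax⟩ := exists_forall_norm_le hcont hx (K := K + J + 1) (by omega)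
    refine ⟨w', hw', hzw.trans ?_⟩
    rw [pow_succ, mul_assoc]
    gcongr
    exact hg.norm_le_mul hC hx (by omega) hw hmax

lemma exists_forall_norm_le_norm (hC : 1 ≤ C) {J : ℕ} (hJ : (p : ℝ) ^ (-J : ℤ) < C⁻¹) {x : X}
    (hx : x ∈ padicBall p x₀ k₀) {K : ℕ} (hK : k₀ ≤ K) :
    ∃ y ∈ padicBall p x K, ∀ w ∈ padicBall p y (K + J), ‖g x‖ ≤ ‖g w‖ := by
  obtain ⟨y, hy, hmax⟩ := exists_forall_norm_le hcont hx hK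
  refine ⟨y, hy, fun w hw => (hmax x (mem_padicBall_self p x K)).trans ?_⟩
  obtain h0 | hpos := (norm_nonneg (g y)).eq_or_lt
  · exact h0 ▸ norm_nonneg _
  have hvar : ‖g w - g y‖ ≤ (p : ℝ) ^ (-J : ℤ) * (C * ‖g y‖) :=
    hg y (padicBall_subset_of_mem hx hK hy) K hK _
      (fun z hz => hmax z (padicBall_subset_of_mem hy K.le_succ hz)) J w hw
  have hlt : ‖g w - g y‖ < ‖g y‖ := by
    calc ‖g w - g y‖ ≤ (p : ℝ) ^ (-J : ℤ) * (C * ‖g y‖) := hvar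
      _ < C⁻¹ * (C * ‖g y‖) := by gcongr
      _ = ‖g y‖ := inv_mul_cancel_left₀ (by positivity) _
  rw [← add_sub_cancel (g y) (g w),
    IsUltrametricDist.norm_add_eq_max_of_norm_ne_norm hlt.ne']
  exact le_max_left _ _

omit hg hcont in
lemma exists_spreadsOn (hC : 1 ≤ C) : ∃ (θ : ℝ) (J : ℕ), 0 < θ ∧ θ < 1 ∧
    ∀ g : X → V, HasBernsteinBound p x₀ k₀ C g → ContinuousOn g (padicBall p x₀ k₀) →
      SpreadsOn p x₀ k₀ θ J (fun x => ‖g x‖) := by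
  obtain ⟨J, hJ⟩ := exists_padicBall_radius_lt p (inv_pos.mpr (zero_lt_one.trans_le hC))
  have hCJ : 1 ≤ C ^ J := one_le_pow₀ hC
  refine ⟨(C ^ J + 1)⁻¹, J, by positivity, inv_lt_one_of_one_lt₀ (by linarith),
    fun g hg hcont => ⟨fun hx K hK z hz => ?_, hg.exists_forall_norm_le_norm hcont hC hJ⟩⟩
  obtain ⟨w, hw, hle⟩ := hg.exists_norm_le_pow_mul hcont hC hx hK hz J
  refine ⟨w, hw, ?_⟩
  rw [inv_mul_le_iff₀ (by positivity)]
  exact hle.trans (by gcongr; linarith)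

end HasBernsteinBound

section Measure

variable [IsUltrametricDist X] [SecondCountableTopology X] [MeasurableSpace X]
  [OpensMeasurableSpace X] {μ : Measure X} {θ : ℝ} {J : ℕ} {g : X → ℝ} {η : ℝ≥0}

lemma SpreadsOn.measure_lt_pow_mul_le (hg : SpreadsOn p x₀ k₀ θ J g) (hg₀ : ∀ x, 0 ≤ g x)
    (hθ₀ : 0 < θ) (hθ₁ : θ ≤ 1)
    (hη : ∀ x k, ∀ y ∈ padicBall p x k,
      μ (padicBall p x k \ padicBall p y (k + J)) ≤ η * μ (padicBall p x k)) (i : ℕ) {x : X}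
    (hx : x ∈ padicBall p x₀ k₀) {K : ℕ} (hK : k₀ ≤ K) :
    μ {u ∈ padicBall p x K | g u < θ ^ i * g x} ≤ η ^ i * μ (padicBall p x K) := by
  induction i generalizing x K with
  | zero => simpa using measure_mono (Set.sep_subset _ _)
  | succ i ih =>
    obtain ⟨y, hy, hxy⟩ := hg.exists_forall_le hx hK
    set Z := {u ∈ padicBall p x K | g u < θ ^ (i + 1) * g x}
    have hZy {u : X} (hu : u ∈ Z) : u ∉ padicBall p y (K + J) := fun huy =>
      (hu.2.trans_le (mul_le_of_le_one_left (hg₀ x) (pow_le_one₀ hθ₀.le hθ₁))).not_ge (hxy u huy)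
    have hZ : μ Z ≤ η ^ i * μ (padicBall p x K \ padicBall p y (K + J)) := by
      refine measure_le_mul_of_forall_exists_padicBall (p := p) μ fun w hw => ⟨K + J, ?_, ?_⟩
      · refine fun u hu => ⟨padicBall_subset_of_mem hw.1 (by omega) hu, fun huy => hZy hw ?_⟩
        rw [← padicBall_eq_of_mem huy, padicBall_eq_of_mem hu]
        exact mem_padicBall_self p w _
      · have hxw : x ∈ padicBall p w K := padicBall_eq_of_mem hw.1 ▸ mem_padicBall_self p x K
        have hw₀ := padicBall_subset_of_mem hx hK hw.1
        obtain ⟨z, hz, hxz⟩ := hg.exists_le hw₀ hK hxw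
        rw [← padicBall_eq_of_mem hz]
        refine (measure_mono (t := {u ∈ padicBall p z (K + J) | g u < θ ^ i * g z})
          fun u hu => ⟨hu.2, hu.1.2.trans_le ?_⟩).trans
          (ih (padicBall_subset_of_mem hw₀ (by omega) hz) (K := K + J) (by omega))
        rw [pow_succ, mul_assoc]
        gcongr
    calc μ Z ≤ η ^ i * (η * μ (padicBall p x K)) := hZ.trans (by gcongr; exact hη x K y hy)
      _ = η ^ (i + 1) * μ (padicBall p x K) := by rw [pow_succ, mul_assoc]

lemma exists_isGoodOnBalls_of_spreadsOn (hθ₀ : 0 < θ) (hθ₁ : θ < 1) (hη₀ : 0 < η) (hη₁ : η < 1)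
    (hη : ∀ x k, ∀ y ∈ padicBall p x k,
      μ (padicBall p x k \ padicBall p y (k + J)) ≤ η * μ (padicBall p x k)) :
    ∃ C, ∃ α > 0, ∀ g : X → ℝ, SpreadsOn p x₀ k₀ θ J g → (∀ x, 0 ≤ g x) →
      IsGoodOnBalls p μ x₀ k₀ C α g := by
  have hlogθ : Real.log θ < 0 := Real.log_neg hθ₀ hθ₁
  have hη₀' : (0 : ℝ) < η := hη₀
  have hlogη : Real.log η < 0 := Real.log_neg hη₀' hη₁
  have hθα : θ ^ (Real.log η / Real.log θ) = η := by
    rw [Real.rpow_def_of_pos hθ₀, mul_div_cancel₀ _ hlogθ.ne, Real.exp_log hη₀']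
  refine ⟨(η : ℝ)⁻¹, _, div_pos_of_neg_of_neg hlogη hlogθ,
    fun g hg hg₀ z hz K hK ε hε₀ hε₁ => ?_⟩
  obtain ⟨i, hi, hi'⟩ := exists_nat_pow_near_of_lt_one hε₀ hε₁ hθ₀ hθ₁
  have hpow : (η : ℝ) ^ i ≤ (η : ℝ)⁻¹ * ε ^ (Real.log η / Real.log θ) := by
    rw [le_inv_mul_iff₀ hη₀', ← pow_succ']
    calc (η : ℝ) ^ (i + 1) = (θ ^ (i + 1)) ^ (Real.log η / Real.log θ) := by
          rw [← hθα, Real.rpow_pow_comm hθ₀.le, hθα]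
      _ ≤ ε ^ (Real.log η / Real.log θ) :=
          Real.rpow_le_rpow (by positivity) hi.le (div_pos_of_neg_of_neg hlogη hlogθ).le
  calc μ {x ∈ padicBall p z K | g x < ε * g z}
      ≤ μ {x ∈ padicBall p z K | g x < θ ^ i * g z} :=
        measure_mono fun x hx => ⟨hx.1, hx.2.trans_le (by gcongr; exact hg₀ z)⟩
    _ ≤ η ^ i * μ (padicBall p z K) := hg.measure_lt_pow_mul_le hg₀ hθ₀ hθ₁.le hη i hz hK
    _ ≤ _ := by
        gcongr
        rw [← ENNReal.ofReal_coe_nnreal, ← ENNReal.ofReal_pow hη₀'.le]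
        exact ENNReal.ofReal_le_ofReal hpow

end Measure

section AnalyticMeasure

variable {E F : Type*} [NormedAddCommGroup E] [NormedSpace ℚ_[p] E] [IsUltrametricDist E]
  [ProperSpace E] [MeasurableSpace E] [BorelSpace E] [NormedAddCommGroup F] [NormedSpace ℚ_[p] F]
  [FiniteDimensional ℚ_[p] F]

theorem exists_isGoodOnBalls_norm_dual_comp {f : E → F} {x₀ : E} (hf : AnalyticAt ℚ_[p] f x₀) :
    ∃ k₀ : ℕ, ContinuousOn f (padicBall p x₀ k₀) ∧
      ∀ (μ : Measure E) [μ.IsAddHaarMeasure], ∃ C, ∃ α > 0, ∀ ℓ : StrongDual ℚ_[p] F,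
        IsGoodOnBalls p μ x₀ k₀ C α (fun x => ‖ℓ (f x)‖) := by
  obtain ⟨k₀, C, hC, hcont, hB⟩ := exists_hasBernsteinBound_dual_comp hf
  obtain ⟨θ, J, hθ₀, hθ₁, hspread⟩ := HasBernsteinBound.exists_spreadsOn (p := p) (x₀ := x₀)
    (k₀ := k₀) (V := ℚ_[p]) hC
  refine ⟨k₀, hcont, fun μ hμ => ?_⟩
  obtain ⟨η, hη₀, hη₁, hη⟩ := exists_measure_padicBall_sdiff_le (p := p) μ J
  obtain ⟨C', α, hα, hgood⟩ := exists_isGoodOnBalls_of_spreadsOn (x₀ := x₀) (k₀ := k₀)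
    hθ₀ hθ₁ hη₀ hη₁ hη
  exact ⟨C', α, hα, fun ℓ => hgood _
    (hspread _ (hB ℓ) (ℓ.continuous.comp_continuousOn hcont)) fun x => norm_nonneg _⟩

end AnalyticMeasure

end Goodness

section Marking

variable {P : Type*} [PartialOrder P]

/-- The marking of Kleinbock and Margulis: `S` contains a flag on which the weights `ψ` lie between
`ε` and `1`, while every element of `S` that could still be inserted in the flag has weight at least
`1`. -/
def IsMarked (ε : ℝ) (ψ : P → ℝ) (S : Set P) : Prop :=
  ∃ F ⊆ S, IsChain (· ≤ ·) F ∧ (∀ U ∈ F, ε ≤ ψ U ∧ ψ U ≤ 1) ∧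
    ∀ V ∈ S, (∀ U ∈ F, V < U ∨ U < V) → 1 ≤ ψ V

lemma IsMarked.of_forall_one_le {ε : ℝ} {ψ : P → ℝ} {S : Set P} (h : ∀ V ∈ S, 1 ≤ ψ V) :
    IsMarked ε ψ S :=
  ⟨∅, Set.empty_subset S, IsChain.empty, by simp, fun V hV _ => h V hV⟩

lemma IsMarked.of_comparable {ε : ℝ} {ψ : P → ℝ} {S : Set P} {U : P} (hU : U ∈ S) (hεU : ε ≤ ψ U)
    (hU1 : ψ U ≤ 1) (h : IsMarked ε ψ {V ∈ S | V < U ∨ U < V}) : IsMarked ε ψ S := by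
  obtain ⟨F, hFS, hF, hψ, hins⟩ := h
  refine ⟨insert U F, Set.insert_subset hU fun V hV => (hFS hV).1, hF.insert fun V hV _ => ?_,
    Set.forall_mem_insert.mpr ⟨⟨hεU, hU1⟩, hψ⟩, fun V hV hcomp => ?_⟩
  · exact (hFS hV).2.symm.imp le_of_lt le_of_lt
  · rw [Set.forall_mem_insert] at hcomp
    exact hins V ⟨hV, hcomp.1⟩ hcomp.2

variable {X : Type*} [PseudoMetricSpace X] {p} {ψ : X → P → ℝ} {S : Set P}

omit [PartialOrder P] in
lemma exists_padicBall_forall_lt {g : X → ℝ} {x : X} (hg : ContinuousAt g x) {c : ℝ}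
    (hx : g x < c) : ∃ k, ∀ y ∈ padicBall p x k, g y < c := by
  obtain ⟨r, hr, hball⟩ := Metric.mem_nhds_iff.mp (hg.eventually_lt_const hx)
  obtain ⟨k, hk⟩ := exists_padicBall_radius_lt p hr
  exact ⟨k, fun y hy => hball (closedBall_subset_ball hk hy)⟩

variable [IsUltrametricDist X]

omit [PartialOrder P] in
lemma exists_maximal_padicBall_forall_lt_one {x₁ x : X} {K : ℕ} (hx : x ∈ padicBall p x₁ K)
    (hsup : ∀ V ∈ S, ∃ z ∈ padicBall p x₁ K, 1 ≤ ψ z V)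
    (hlt : ∃ k, ∃ V ∈ S, ∀ y ∈ padicBall p x k, ψ y V < 1) :
    ∃ k ≥ K, (∃ V ∈ S, ∀ y ∈ padicBall p x (k + 1), ψ y V < 1) ∧
      ∀ V ∈ S, ∃ z ∈ padicBall p x k, 1 ≤ ψ z V := by
  classical
  have hK {m : ℕ} (hm : m ≤ K) : ¬ ∃ V ∈ S, ∀ y ∈ padicBall p x m, ψ y V < 1 := by
    rintro ⟨V, hV, hVm⟩
    obtain ⟨z, hz, hz1⟩ := hsup V hV
    rw [← padicBall_eq_of_mem hx] at hz
    exact (hVm z (padicBall_anti p x hm hz)).not_ge hz1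
  obtain ⟨k, hk⟩ : ∃ k, Nat.find hlt = k + 1 := Nat.exists_eq_succ_of_ne_zero fun h0 =>
    hK K.zero_le (h0 ▸ Nat.find_spec hlt)
  have hspec : ∃ V ∈ S, ∀ y ∈ padicBall p x (k + 1), ψ y V < 1 := hk ▸ Nat.find_spec hlt
  refine ⟨k, not_lt.mp fun hkK => hK hkK hspec, hspec, ?_⟩
  simpa using Nat.find_min hlt (show k < Nat.find hlt by omega)

lemma exists_maximal_padicBall_of_not_isMarked {x₁ x : X} {K : ℕ} {ε : ℝ}
    (hψ : ∀ V, ContinuousAt (ψ · V) x) (hx : x ∈ padicBall p x₁ K)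
    (hsup : ∀ V ∈ S, ∃ z ∈ padicBall p x₁ K, 1 ≤ ψ z V) (hmark : ¬ IsMarked ε (ψ x) S) :
    ∃ k ≥ K, (∃ V ∈ S, ∀ y ∈ padicBall p x (k + 1), ψ y V < 1) ∧
      ∀ V ∈ S, ∃ z ∈ padicBall p x k, 1 ≤ ψ z V := by
  obtain ⟨V, hV, hVx⟩ : ∃ V ∈ S, ψ x V < 1 := by
    by_contra! hge
    exact hmark (.of_forall_one_le hge)
  obtain ⟨k, hk⟩ := exists_padicBall_forall_lt (p := p) (hψ V) hVx
  exact exists_maximal_padicBall_forall_lt_one hx hsup ⟨k, V, hV, hk⟩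

omit [PartialOrder P] in
lemma IsGoodOnBalls.measure_lt_le [MeasurableSpace X] {μ : Measure X} {x₀ x : X} {k₀ k : ℕ}
    {C α ε : ℝ} {g : X → ℝ} (hg : IsGoodOnBalls p μ x₀ k₀ C α g) (hε₀ : 0 < ε) (hε₁ : ε ≤ 1)
    (hx : x ∈ padicBall p x₀ k₀) (hk : k₀ ≤ k) (hsup : ∃ z ∈ padicBall p x k, 1 ≤ g z) :
    μ {y ∈ padicBall p x k | g y < ε} ≤ ENNReal.ofReal (C * ε ^ α) * μ (padicBall p x k) := by
  obtain ⟨z, hz, hz1⟩ := hsup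
  rw [← padicBall_eq_of_mem hz]
  calc μ {y ∈ padicBall p z k | g y < ε} ≤ μ {y ∈ padicBall p z k | g y < ε * g z} :=
        measure_mono fun y hy => ⟨hy.1, hy.2.trans_le (le_mul_of_one_le_right hε₀.le hz1)⟩
    _ ≤ _ := hg z (padicBall_subset_of_mem hx hk hz) k hk ε hε₀ hε₁

variable [SecondCountableTopology X] [MeasurableSpace X] [OpensMeasurableSpace X]

theorem measure_not_isMarked_le {r : P → ℕ} (hr : StrictMono r) {μ : Measure X} {D : ℕ}
    (hD : ∀ x k, μ (padicBall p x k) ≤ D * μ (padicBall p x (k + 1))) {x₀ : X} {k₀ : ℕ} {C α ε : ℝ}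
    (hε₀ : 0 < ε) (hε₁ : ε ≤ 1) (hψ : ∀ V, ContinuousOn (ψ · V) (padicBall p x₀ k₀))
    (hgood : ∀ V, IsGoodOnBalls p μ x₀ k₀ C α (ψ · V)) (T : Finset ℕ) (hT : ∀ V ∈ S, r V ∈ T)
    {x₁ : X} (hx₁ : x₁ ∈ padicBall p x₀ k₀) {K : ℕ} (hK : k₀ ≤ K)
    (hsup : ∀ V ∈ S, ∃ z ∈ padicBall p x₁ K, 1 ≤ ψ z V) :
    μ {x ∈ padicBall p x₁ K | ¬ IsMarked ε (ψ x) S} ≤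
      (∑ i ∈ Finset.range T.card, D ^ (i + 1) : ℕ) * ENNReal.ofReal (C * ε ^ α) *
        μ (padicBall p x₁ K) := by
  induction T using Finset.strongInduction generalizing S x₁ K with | H T ih
  refine measure_le_mul_of_forall_exists_padicBall (p := p) μ fun x hx => ?_
  have hx₀ : x ∈ padicBall p x₀ k₀ := padicBall_subset_of_mem hx₁ hK hx.1
  obtain ⟨k, hKk, ⟨V, hV, hVk⟩, hsup'⟩ := exists_maximal_padicBall_of_not_isMarked
    (fun V => (hψ V).continuousAt ((isOpen_padicBall p x₀ k₀).mem_nhds hx₀)) hx.1 hsup hx.2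
  refine ⟨k + 1, padicBall_subset_of_mem hx.1 (by omega), ?_⟩
  set S' := {U ∈ S | U < V ∨ V < U}
  have hunmarked := ih (T.erase (r V)) (Finset.erase_ssubset (hT V hV)) (S := S')
    (fun U hU => Finset.mem_erase.mpr
      ⟨hU.2.elim (fun h => (hr h).ne) (fun h => (hr h).ne'), hT U hU.1⟩)
    hx₀ (hK.trans hKk) (fun U hU => hsup' U hU.1)
  have hsmall : μ {y ∈ padicBall p x k | ψ y V < ε} ≤
      ENNReal.ofReal (C * ε ^ α) * μ (padicBall p x k) :=
    (hgood V).measure_lt_le hε₀ hε₁ hx₀ (hK.trans hKk) (hsup' V hV)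
  have hsub : {y ∈ padicBall p x₁ K | ¬ IsMarked ε (ψ y) S} ∩ padicBall p x (k + 1) ⊆
      {y ∈ padicBall p x k | ¬ IsMarked ε (ψ y) S'} ∪ {y ∈ padicBall p x k | ψ y V < ε} := by
    rintro y ⟨⟨-, hy⟩, hyk⟩
    have hyk' := padicBall_anti p x k.le_succ hyk
    refine (lt_or_ge (ψ y V) ε).symm.imp (fun h => ⟨hyk', fun hmark => hy ?_⟩) fun h => ⟨hyk', h⟩
    exact hmark.of_comparable hV h (hVk y hyk).le
  set c := ∑ i ∈ Finset.range (T.erase (r V)).card, D ^ (i + 1)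
  have hc : ∑ i ∈ Finset.range T.card, D ^ (i + 1) = (c + 1) * D := by
    rw [← Finset.card_erase_add_one (hT V hV), Finset.sum_range_succ', add_mul, Finset.sum_mul]
    simp only [pow_succ, pow_zero]
  calc _ ≤ c * ENNReal.ofReal (C * ε ^ α) * μ (padicBall p x k) +
          ENNReal.ofReal (C * ε ^ α) * μ (padicBall p x k) :=
        (measure_mono hsub).trans ((measure_union_le _ _).trans (add_le_add hunmarked hsmall))
    _ = (c + 1) * ENNReal.ofReal (C * ε ^ α) * μ (padicBall p x k) := by ring
    _ ≤ (c + 1) * ENNReal.ofReal (C * ε ^ α) * (D * μ (padicBall p x (k + 1))) := by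
        gcongr
        exact hD x k
    _ = _ := by
        rw [hc]
        push_cast
        ring

end Marking

section Nondivergence

variable {p} {ι : Type*} [Fintype ι]

lemma IsMarked.mul_le_card_mul_norm {t : ℕ} {y : ι → ℚ_[p]} {R ε : ℝ} (hR : 0 < R) (hε : ε ≤ 1)
    (h : IsMarked ε (fun V => covolAt t V y / R ^ Module.finrank ℚ V) (Set.Ioi ⊥)) {q : ι → ℤ}
    (hq : q ∈ smallPoints t y) (hq₀ : q ≠ 0) : ε * R ≤ Fintype.card ι * ‖q‖ := by
  obtain ⟨F, -, hF, hψ, hins⟩ := h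
  have hF' : IsChain (· ≤ ·) (insert ⊥ F) := hF.insert fun V _ _ => .inl bot_le
  obtain ⟨A, ⟨hAF, hqA⟩, hAmax⟩ := wellFounded_gt.has_min {A ∈ insert ⊥ F | ratVec q ∉ A}
    ⟨⊥, .inl rfl, by simpa using (map_ne_zero_iff _ ratVec_injective).mpr hq₀⟩
  set V := A ⊔ ℚ ∙ ratVec q
  have hAV : A < V := by simpa [V] using hqA
  have hcomp {U : Submodule ℚ (ι → ℚ)} (hU : U ∈ F) (hUV : U ≠ V) : V < U ∨ U < V := by
    by_cases hqU : ratVec q ∈ U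
    · have hAU : A ≤ U := (hF'.total hAF (.inr hU)).resolve_right fun h => hqA (h hqU)
      exact .inl (lt_of_le_of_ne (sup_le hAU ((Submodule.span_singleton_le_iff_mem _ _).mpr hqU))
        hUV.symm)
    · have hUA : U ≤ A := (hF'.total (.inr hU) hAF).elim id fun h =>
        (eq_or_lt_of_le h).elim ge_of_eq fun h => absurd h (hAmax U ⟨.inr hU, hqU⟩)
      exact .inr (hUA.trans_lt hAV)
  have hεV : ε ≤ covolAt t V y / R ^ Module.finrank ℚ V := by
    by_cases hVF : V ∈ F
    · exact (hψ V hVF).1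
    · exact hε.trans (hins V (bot_le.trans_lt hAV) fun U hU =>
        hcomp hU (ne_of_mem_of_not_mem hU hVF))
  have hA₁ : covolAt t A y / R ^ Module.finrank ℚ A ≤ 1 := by
    obtain rfl | hAF := hAF
    · simp [covolAt_bot]
    · exact (hψ A hAF).2
  rw [Submodule.finrank_sup_span_singleton hqA, le_div_iff₀ (by positivity), pow_succ] at hεV
  rw [div_le_one (by positivity)] at hA₁
  refine le_of_mul_le_mul_left ?_ (pow_pos hR (Module.finrank ℚ A))
  calc R ^ Module.finrank ℚ A * (ε * R) = ε * (R ^ Module.finrank ℚ A * R) := by ring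
    _ ≤ covolAt t V y := hεV
    _ ≤ Fintype.card ι * ‖q‖ * covolAt t A y := covolAt_sup_span_singleton_le hqA hq
    _ ≤ Fintype.card ι * ‖q‖ * R ^ Module.finrank ℚ A := by gcongr
    _ = R ^ Module.finrank ℚ A * (Fintype.card ι * ‖q‖) := mul_comm _ _

lemma isGoodOnBalls_covolAt_comp {X : Type*} [PseudoMetricSpace X] [MeasurableSpace X]
    {μ : Measure X} {x₀ : X} {k₀ : ℕ} {C α : ℝ} {f : X → ι → ℚ_[p]}
    (hf : ∀ q : ι → ℤ, IsGoodOnBalls p μ x₀ k₀ C α (fun x => ‖linForm (f x) q‖)) (t : ℕ)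
    (V : Submodule ℚ (ι → ℚ)) {c : ℝ} (hc : 0 < c) :
    IsGoodOnBalls p μ x₀ k₀ C α (fun x => covolAt t V (f x) / c) := by
  intro z hz K hK ε hε₀ hε₁
  obtain ⟨q, hq⟩ := exists_norm_linForm_lt_of_covolAt_lt t V (f z)
  refine le_trans (measure_mono ?_) (hf q z hz K hK ε hε₀ hε₁)
  rintro x ⟨hx, hlt⟩
  rw [← mul_div_assoc, div_lt_div_iff_of_pos_right hc] at hlt
  exact ⟨hx, hq ε hε₁ (f x) hlt⟩

theorem exists_measure_exists_smallPoint_le {E : Type*} [NormedAddCommGroup E]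
    [NormedSpace ℚ_[p] E] [IsUltrametricDist E] [ProperSpace E] [MeasurableSpace E] [BorelSpace E]
    {f : E → ι → ℚ_[p]} {x₀ : E} (hf : AnalyticAt ℚ_[p] f x₀) :
    ∃ k₀ : ℕ, ∀ (μ : Measure E) [μ.IsAddHaarMeasure], ∃ C α : ℝ, 0 < α ∧ ∀ (t : ℕ) (R ε : ℝ),
      0 < R → 0 < ε → ε ≤ 1 →
      (∀ V : Submodule ℚ (ι → ℚ), R ^ Module.finrank ℚ V ≤ covolAt t V (f x₀)) →
      μ {x ∈ padicBall p x₀ k₀ | ∃ q ∈ smallPoints t (f x), q ≠ 0 ∧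
          Fintype.card ι * ‖q‖ < ε * R} ≤
        ENNReal.ofReal (C * ε ^ α) * μ (padicBall p x₀ k₀) := by
  obtain ⟨k₀, hcont, hgood⟩ := exists_isGoodOnBalls_norm_dual_comp hf
  refine ⟨k₀, fun μ hμ => ?_⟩
  obtain ⟨D, hD⟩ := exists_measure_padicBall_le_mul (p := p) μ 1
  obtain ⟨C, α, hα, hgoodμ⟩ := hgood μ
  have hlin (q : ι → ℤ) : IsGoodOnBalls p μ x₀ k₀ C α (fun x => ‖linForm (f x) q‖) := by
    let ℓ : StrongDual ℚ_[p] (ι → ℚ_[p]) := ∑ i, (q i : ℚ_[p]) • ContinuousLinearMap.proj i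
    have hℓ (y : ι → ℚ_[p]) : linForm y q = ℓ y := by simp [ℓ, linForm_apply]
    simpa only [hℓ] using hgoodμ ℓ
  let c : ℕ := ∑ i ∈ Finset.range (Finset.range (Fintype.card ι + 1)).card, D ^ (i + 1)
  refine ⟨c * C, α, hα, fun t R ε hR hε₀ hε₁ hV => ?_⟩
  have hmarked := measure_not_isMarked_le (S := Set.Ioi ⊥)
    (ψ := fun x (V : Submodule ℚ (ι → ℚ)) => covolAt t V (f x) / R ^ Module.finrank ℚ V)
    (fun V W h => Submodule.finrank_lt_finrank_of_lt h) hD hε₀ hε₁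
    (fun V => (((continuous_covolAt t V).comp_continuousOn hcont).div_const _))
    (fun V => isGoodOnBalls_covolAt_comp hlin t V (pow_pos hR _))
    (Finset.range (Fintype.card ι + 1))
    (fun V _ => Finset.mem_range_succ_iff.mpr ((Submodule.finrank_le V).trans_eq (by simp)))
    (mem_padicBall_self p x₀ k₀) le_rfl
    (fun V _ => ⟨x₀, mem_padicBall_self p x₀ k₀, (one_le_div (by positivity)).mpr (hV V)⟩)
  refine (measure_mono ?_).trans (hmarked.trans_eq ?_)
  · rintro x ⟨hx, q, hq, hq₀, hqR⟩
    exact ⟨hx, fun h => hqR.not_ge (h.mul_le_card_mul_norm hR hε₁ hq hq₀)⟩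
  · rw [mul_assoc (c : ℝ), ENNReal.ofReal_mul c.cast_nonneg, ENNReal.ofReal_natCast]

end Nondivergence

section Diophantine

variable {p} {ι : Type*} [Fintype ι]

/-- `y` admits no integer relation of quality better than `w`: `‖q · y‖ ≫ ‖q‖ ^ (-w)`. -/
def IsDiophantine (w : ℝ) (y : ι → ℚ_[p]) : Prop :=
  ∃ c > 0, ∀ q : ι → ℤ, q ≠ 0 → c * ‖q‖ ^ (-w) ≤ ‖linForm y q‖

lemma mul_rpow_inv_le_iff {c P X w : ℝ} (hc : 0 < c) (hP : 0 < P) (hX : 0 < X) (hw : 0 < w) :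
    c * P ^ w⁻¹ ≤ X ↔ c ^ w * X ^ (-w) ≤ P⁻¹ := by
  rw [← Real.rpow_le_rpow_iff (by positivity) hX.le hw, Real.mul_rpow hc.le (by positivity),
    Real.rpow_inv_rpow hP.le hw.ne', Real.rpow_neg hX.le, ← div_eq_mul_inv,
    div_le_iff₀ (by positivity), ← div_eq_inv_mul, le_div_iff₀ hP]

lemma IsDiophantine.exists_le_norm_of_mem_smallPoints {w : ℝ} (hw : 0 < w) {y : ι → ℚ_[p]}
    (h : IsDiophantine w y) :
    ∃ c > 0, ∀ t, ∀ q ∈ smallPoints t y, q ≠ 0 → c * ((p : ℝ) ^ t) ^ w⁻¹ ≤ ‖q‖ := by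
  obtain ⟨c, hc, h⟩ := h
  have hp := (Fact.out : p.Prime).pos
  refine ⟨c ^ w⁻¹, by positivity, fun t q hq hq₀ => ?_⟩
  rw [mul_rpow_inv_le_iff (by positivity) (by positivity) (norm_pos_iff.mpr hq₀) hw,
    Real.rpow_inv_rpow hc.le hw.ne']
  exact (h q hq₀).trans (by simpa using mem_smallPoints.mp hq)

omit [Fact p.Prime] in
lemma one_le_norm_of_intVec_ne_zero {q : ι → ℤ} (hq : q ≠ 0) : 1 ≤ ‖q‖ := by
  obtain ⟨i, hi⟩ := Function.ne_iff.mp hq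
  calc (1 : ℝ) ≤ ‖q i‖ := by
        rw [Int.norm_eq_abs]
        exact_mod_cast Int.one_le_abs hi
    _ ≤ ‖q‖ := norm_le_pi_norm q i

lemma isDiophantine_of_eventually_le_norm {w c : ℝ} (hw : 0 < w) (hc : 0 < c) {y : ι → ℚ_[p]}
    (h : ∀ᶠ t : ℕ in Filter.atTop, ∀ q ∈ smallPoints t y, q ≠ 0 →
      c * ((p : ℝ) ^ t) ^ w⁻¹ ≤ ‖q‖) : IsDiophantine w y := by
  obtain ⟨t₀, h⟩ := Filter.eventually_atTop.mp h
  have hp : (1 : ℝ) < p := mod_cast (Fact.out : p.Prime).one_lt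
  have hpt (t : ℕ) : (0 : ℝ) < p ^ t := by positivity
  set c' := min c (((p : ℝ) ^ t₀) ^ w⁻¹)⁻¹
  have hc' : 0 < c' := by positivity
  refine ⟨c' ^ w, by positivity, fun q hq₀ => ?_⟩
  have hq : 0 < ‖q‖ := norm_pos_iff.mpr hq₀
  have hlin : linForm y q ≠ 0 := fun h0 => by
    have hlim : Filter.Tendsto (fun t : ℕ => c * ((p : ℝ) ^ t) ^ w⁻¹) .atTop .atTop :=
      ((tendsto_rpow_atTop (by positivity)).comp
        (tendsto_pow_atTop_atTop_of_one_lt hp)).const_mul_atTop hc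
    obtain ⟨t, ht, hqt⟩ := ((Filter.eventually_ge_atTop t₀).and
      (hlim.eventually_gt_atTop ‖q‖)).exists
    exact hqt.not_ge (h t ht q (by simp [mem_smallPoints, h0]) hq₀)
  have hbound {t : ℕ} (ht : (p : ℝ) ^ (-t : ℤ) ≤ ‖linForm y q‖)
      (hct : c' * ((p : ℝ) ^ t) ^ w⁻¹ ≤ ‖q‖) : c' ^ w * ‖q‖ ^ (-w) ≤ ‖linForm y q‖ :=
    ((mul_rpow_inv_le_iff hc' (hpt t) hq hw).mp hct).trans (by simpa using ht)
  have hval := Padic.norm_eq_zpow_neg_valuation hlin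
  obtain hle | hlt := le_or_gt (t₀ : ℤ) (linForm y q).valuation
  · lift (linForm y q).valuation to ℕ using by omega with m
    refine hbound hval.ge (le_trans ?_ (h m (by omega) q hval.le hq₀))
    gcongr
    exact min_le_left _ _
  · refine hbound (t := t₀) (hval ▸ zpow_le_zpow_right₀ hp.le (by omega)) ?_
    calc c' * ((p : ℝ) ^ t₀) ^ w⁻¹ ≤ (((p : ℝ) ^ t₀) ^ w⁻¹)⁻¹ * ((p : ℝ) ^ t₀) ^ w⁻¹ := by
          gcongr
          exact min_le_right _ _
      _ = 1 := inv_mul_cancel₀ (by positivity)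
      _ ≤ ‖q‖ := one_le_norm_of_intVec_ne_zero hq₀

omit [Fact p.Prime] in
lemma tsum_ofReal_mul_rpow_ne_top {b δ α : ℝ} (hb : 1 < b) (hδ : 0 < δ) (hα : 0 < α) (C : ℝ) :
    ∑' t : ℕ, ENNReal.ofReal (C * ((b ^ t) ^ (-δ)) ^ α) ≠ ⊤ := by
  have hb₀ : 0 < b := zero_lt_one.trans hb
  have hpow (t : ℕ) : ((b ^ t) ^ (-δ)) ^ α = (b ^ (-δ * α)) ^ t := by
    rw [← Real.rpow_mul (by positivity), Real.rpow_pow_comm hb₀.le]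
  simp only [hpow]
  refine (Summable.mul_left C (summable_geometric_of_lt_one (by positivity) ?_)).tsum_ofReal_ne_top
  exact Real.rpow_lt_one_of_one_lt_of_neg hb (by nlinarith)

theorem ae_isDiophantine_of_isDiophantine [Nonempty ι] {E : Type*} [NormedAddCommGroup E]
    [NormedSpace ℚ_[p] E] [IsUltrametricDist E] [ProperSpace E] [MeasurableSpace E] [BorelSpace E]
    {f : E → ι → ℚ_[p]} {x₀ : E} (hf : AnalyticAt ℚ_[p] f x₀) :
    ∃ k₀ : ℕ, ∀ (μ : Measure E) [μ.IsAddHaarMeasure] (w w' : ℝ), 0 < w → w < w' →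
      IsDiophantine w (f x₀) → ∀ᵐ x ∂μ, x ∈ padicBall p x₀ k₀ → IsDiophantine w' (f x) := by
  obtain ⟨k₀, hk₀⟩ := exists_measure_exists_smallPoint_le hf
  refine ⟨k₀, fun μ hμ w w' hw hww' hdioph => ?_⟩
  obtain ⟨C, α, hα, hμ⟩ := hk₀ μ
  obtain ⟨c, hc, hsmall⟩ := hdioph.exists_le_norm_of_mem_smallPoints hw
  have hp : (1 : ℝ) < p := mod_cast (Fact.out : p.Prime).one_lt
  have hpt (t : ℕ) : (0 : ℝ) < p ^ t := by positivity
  set N : ℝ := (Fintype.card ι : ℝ)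
  have hN : 0 < N := Nat.cast_pos.mpr Fintype.card_pos
  set δ := w⁻¹ - w'⁻¹
  have hδ : 0 < δ := sub_pos.mpr (inv_strictAnti₀ hw hww')
  let R (t : ℕ) : ℝ := c * ((p : ℝ) ^ t) ^ w⁻¹ / N
  let ε (t : ℕ) : ℝ := ((p : ℝ) ^ t) ^ (-δ)
  have hεR (t : ℕ) : ε t * R t = N * (c / N ^ 2 * ((p : ℝ) ^ t) ^ w'⁻¹) := by
    have : ((p : ℝ) ^ t) ^ w'⁻¹ = ((p : ℝ) ^ t) ^ (-δ) * ((p : ℝ) ^ t) ^ w⁻¹ := by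
      rw [← Real.rpow_add (hpt t)]
      congr 1
      ring
    simp only [ε, R, this]
    field_simp
  let s (t : ℕ) : Set E := {x ∈ padicBall p x₀ k₀ | ∃ q ∈ smallPoints t (f x), q ≠ 0 ∧
    N * ‖q‖ < ε t * R t}
  have hs (t : ℕ) : μ (s t) ≤ ENNReal.ofReal (C * ε t ^ α) * μ (padicBall p x₀ k₀) :=
    hμ t (R t) (ε t) (by positivity) (by positivity)
      (Real.rpow_le_one_of_one_le_of_nonpos (one_le_pow₀ hp.le) (by linarith))
      (pow_le_covolAt (by positivity) (hsmall t))
  have hsum : ∑' t, μ (s t) ≠ ⊤ := by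
    refine ne_top_of_le_ne_top ?_ (ENNReal.tsum_le_tsum hs)
    rw [ENNReal.tsum_mul_right]
    exact ENNReal.mul_ne_top (tsum_ofReal_mul_rpow_ne_top hp hδ hα C)
      (isCompact_closedBall x₀ _).measure_lt_top.ne
  filter_upwards [ae_eventually_notMem hsum] with x hx hx₀
  refine isDiophantine_of_eventually_le_norm (hw.trans hww') (c := c / N ^ 2) (by positivity) ?_
  filter_upwards [hx] with t ht q hq hq₀
  by_contra! hlt
  exact ht ⟨hx₀, q, hq, hq₀, by rw [hεR]; gcongr⟩

end Diophantine

section Exponent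

variable {p} {n : ℕ}

omit [Fact p.Prime] in
lemma iSup_norm_eq_norm {ι E : Type*} [Fintype ι] [SeminormedAddCommGroup E] (g : ι → E) :
    ⨆ i, ‖g i‖ = ‖g‖ :=
  le_antisymm (Real.iSup_le (norm_le_pi_norm g) (norm_nonneg g))
    ((pi_norm_le_iff_of_nonneg (Real.iSup_nonneg fun _ => norm_nonneg _)).mpr
      fun i => le_ciSup (f := fun i => ‖g i‖) (Set.finite_range _).bddAbove i)

omit [Fact p.Prime] in
lemma supNormR_eq_norm (q : Fin n → ℚ) : supNormR q = ‖fun i => (q i : ℝ)‖ :=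
  iSup_norm_eq_norm fun i => (q i : ℝ)

lemma supNormP_eq_norm (q : Fin n → ℚ) : supNormP p q = ‖fun i => (q i : ℚ_[p])‖ :=
  iSup_norm_eq_norm fun i => (q i : ℚ_[p])

omit [Fact p.Prime] in
lemma supNormR_nonneg (q : Fin n → ℚ) : 0 ≤ supNormR q := Real.iSup_nonneg fun _ => abs_nonneg _

lemma supNormP_nonneg (q : Fin n → ℚ) : 0 ≤ supNormP p q := Real.iSup_nonneg fun _ => norm_nonneg _

omit [Fact p.Prime] in
lemma supNormR_intCast (q : Fin n → ℤ) : supNormR (fun i => (q i : ℚ)) = ‖q‖ := by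
  rw [← iSup_norm_eq_norm q]
  exact iSup_congr fun i => by simp [Int.norm_eq_abs]

omit [Fact p.Prime] in
lemma supNormR_smul (c : ℚ) (q : Fin n → ℚ) : supNormR (c • q) = |(c : ℝ)| * supNormR q := by
  rw [supNormR_eq_norm, supNormR_eq_norm, ← Real.norm_eq_abs, ← norm_smul]
  congr 1 with i
  simp

lemma supNormP_intCast_smul (c : ℤ) (q : Fin n → ℤ) :
    supNormP p (fun i => ((c • q) i : ℚ)) = ‖(c : ℚ_[p])‖ * supNormP p (fun i => (q i : ℚ)) := by
  rw [supNormP_eq_norm, supNormP_eq_norm, ← norm_smul]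
  congr 1 with i
  simp

lemma supNormP_intCast_le_one (q : Fin n → ℤ) : supNormP p (fun i => (q i : ℚ)) ≤ 1 := by
  rw [supNormP_eq_norm, pi_norm_le_iff_of_nonneg zero_le_one]
  simpa using fun i => Padic.norm_int_le_one (p := p) (q i)

lemma linForm_cons_one (y : Fin n → ℚ_[p]) (q : Fin (n + 1) → ℤ) :
    linForm (Fin.cons 1 y : Fin (n + 1) → ℚ_[p]) q =
      (∑ i, (q i.succ : ℚ_[p]) * y i) + q 0 := by
  rw [linForm_apply, Fin.sum_univ_succ, add_comm]
  simp only [Fin.cons_succ, Fin.cons_zero, mul_one]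

lemma inv_abs_le_norm_intCast {z : ℤ} (hz : z ≠ 0) : |(z : ℝ)|⁻¹ ≤ ‖(z : ℚ_[p])‖ := by
  have hp := (Fact.out : p.Prime).pos
  rw [Padic.norm_eq_zpow_neg_valuation (by exact_mod_cast hz), Padic.valuation_intCast, zpow_neg,
    zpow_natCast]
  refine inv_anti₀ (by positivity) ?_
  exact_mod_cast Int.le_of_dvd (abs_pos.mpr hz) ((dvd_abs _ _).mpr (padicValInt_dvd z))

lemma one_le_supNormP_mul_norm {q : Fin (n + 1) → ℤ} (hq : ∃ i : Fin n, q i.succ ≠ 0) :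
    1 ≤ supNormP p (fun i : Fin n => (q i.succ : ℚ)) * ‖q‖ := by
  obtain ⟨i, hi⟩ := hq
  have habs : |(q i.succ : ℝ)| ≤ ‖q‖ := (Int.norm_eq_abs _).symm.trans_le (norm_le_pi_norm q _)
  have hnorm : ‖(q i.succ : ℚ_[p])‖ ≤ supNormP p (fun i : Fin n => (q i.succ : ℚ)) := by
    rw [supNormP_eq_norm]
    simpa using norm_le_pi_norm (fun i : Fin n => ((q i.succ : ℚ) : ℚ_[p])) i
  calc (1 : ℝ) = |(q i.succ : ℝ)|⁻¹ * |(q i.succ : ℝ)| := by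
        rw [inv_mul_cancel₀ (by simpa using hi)]
    _ ≤ ‖(q i.succ : ℚ_[p])‖ * ‖q‖ := by gcongr; exact inv_abs_le_norm_intCast hi
    _ ≤ _ := by gcongr

variable (p) in
lemma exists_nat_gt_norm_eq_one (T : ℝ) : ∃ M : ℕ, T < M ∧ ‖(M : ℚ_[p])‖ = 1 := by
  obtain ⟨k, hk⟩ := exists_nat_gt T
  refine ⟨p * k + 1, hk.trans ?_, by rw [Padic.norm_natCast_eq_one_iff]; simp⟩
  exact_mod_cast Nat.lt_succ_of_le (Nat.le_mul_of_pos_left k (Fact.out : p.Prime).pos)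

lemma exists_le_norm_linForm_of_not_wpCond {y : Fin n → ℚ_[p]} {v : ℝ} (h : ¬ WpCond p y v) :
    ∃ T : ℝ, ∀ q : Fin (n + 1) → ℤ, T < supNormP p (fun i : Fin n => (q i.succ : ℚ)) * ‖q‖ →
      (supNormP p (fun i : Fin n => (q i.succ : ℚ)) * ‖q‖) ^ (-v) * ‖q‖⁻¹ ≤
        ‖linForm (Fin.cons 1 y : Fin (n + 1) → ℚ_[p]) q‖ := by
  simp only [WpCond, not_forall, not_exists, not_and, not_lt] at h
  obtain ⟨T, hT⟩ := h
  have hint (z : ℤ) : IsZInvP p z := ⟨z, 0, by simp⟩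
  refine ⟨T, fun q hq => ?_⟩
  have hcons : supNormR (Fin.cons (q 0 : ℚ) fun i : Fin n => (q i.succ : ℚ)) = ‖q‖ := by
    rw [← supNormR_intCast]
    congr 1
    exact Fin.cons_self_tail fun i => (q i : ℚ)
  simpa [hcons, linForm_cons_one] using
    hT (q 0) (fun i => q i.succ) (hint _) (fun i => hint _) (hcons ▸ hq)

lemma isDiophantine_of_not_wpCond {y : Fin n → ℚ_[p]} {v : ℝ} (hv : 0 ≤ v)
    (h : ¬ WpCond p y v) : IsDiophantine (v + 1) (Fin.cons 1 y : Fin (n + 1) → ℚ_[p]) := by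
  obtain ⟨T, hT⟩ := exists_le_norm_linForm_of_not_wpCond h
  obtain ⟨M, hTM, hM⟩ := exists_nat_gt_norm_eq_one p (max T 0)
  obtain ⟨hTM, hM₀⟩ := max_lt_iff.mp hTM
  have hM₁ : (1 : ℝ) ≤ M := by exact_mod_cast hM₀
  refine ⟨(M : ℝ) ^ (-(v + 1)), by positivity, fun q hq => ?_⟩
  have hq₁ := one_le_norm_of_intVec_ne_zero hq
  have hMq : 1 ≤ M * ‖q‖ := one_le_mul_of_one_le_of_one_le hM₁ hq₁
  rw [← Real.mul_rpow hM₀.le (norm_nonneg q)]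
  by_cases hex : ∃ i : Fin n, q i.succ ≠ 0
  · set A := supNormP p (fun i : Fin n => (q i.succ : ℚ))
    have hAq : 1 ≤ A * ‖q‖ := one_le_supNormP_mul_norm hex
    have hsup : supNormP p (fun i : Fin n => (((M : ℤ) • q) i.succ : ℚ)) = A := by
      simpa [hM] using supNormP_intCast_smul (p := p) M (fun i : Fin n => q i.succ)
    have hnorm : ‖(M : ℤ) • q‖ = M * ‖q‖ := by rw [norm_smul]; simp
    have hle := hT ((M : ℤ) • q)
    rw [hsup, hnorm, map_smul, zsmul_eq_mul, norm_mul, Int.cast_natCast, hM, one_mul] at hle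
    calc (M * ‖q‖) ^ (-(v + 1)) = (M * ‖q‖) ^ (-v) * (M * ‖q‖)⁻¹ := by
          rw [← Real.rpow_neg_one, ← Real.rpow_add (by positivity), neg_add]
      _ ≤ (A * (M * ‖q‖)) ^ (-v) * (M * ‖q‖)⁻¹ := by
          refine mul_le_mul_of_nonneg_right (Real.rpow_le_rpow_of_nonpos ?_ ?_ ?_) (by positivity)
          · nlinarith
          · exact mul_le_of_le_one_left (by positivity) (supNormP_intCast_le_one _)
          · linarith
      _ ≤ _ := hle (by nlinarith)
  · push Not at hex
    have hq₀ : q 0 ≠ 0 := fun h0 => hq (funext (Fin.cases h0 hex))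
    calc (M * ‖q‖) ^ (-(v + 1)) ≤ (M * ‖q‖) ^ (-1 : ℝ) :=
          Real.rpow_le_rpow_of_exponent_le hMq (by linarith)
      _ ≤ |(q 0 : ℝ)|⁻¹ := by
          rw [Real.rpow_neg_one, ← Int.norm_eq_abs]
          exact inv_anti₀ (norm_pos_iff.mpr hq₀)
            ((norm_le_pi_norm q 0).trans (le_mul_of_one_le_left (norm_nonneg q) hM₁))
      _ ≤ _ := by simpa [linForm_cons_one, hex] using inv_abs_le_norm_intCast hq₀

lemma IsZInvP.zpow_mul {q : ℚ} (hq : IsZInvP p q) (m : ℤ) : IsZInvP p ((p : ℚ) ^ m * q) := by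
  obtain ⟨z, k, rfl⟩ := hq
  have hp : (p : ℚ) ≠ 0 := mod_cast (Fact.out : p.Prime).ne_zero
  obtain ⟨a, rfl | rfl⟩ := Int.eq_nat_or_neg m
  · exact ⟨p ^ a * z, k, by push_cast; rw [zpow_natCast, mul_div_assoc]⟩
  · exact ⟨z, k + a, by rw [zpow_neg, zpow_natCast, pow_add]; field_simp⟩

lemma IsZInvP.exists_int_eq {q : ℚ} (hq : IsZInvP p q) (hnorm : ‖(q : ℚ_[p])‖ ≤ 1) :
    ∃ z : ℤ, (z : ℚ) = q := by
  obtain ⟨z, k, rfl⟩ := hq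
  have hp : (p : ℚ) ≠ 0 := mod_cast (Fact.out : p.Prime).ne_zero
  have hz : ‖(z : ℚ_[p])‖ ≤ (p : ℝ) ^ (-k : ℤ) := by
    push_cast at hnorm
    rwa [norm_div, ← zpow_natCast (p : ℚ_[p]), Padic.norm_p_zpow,
      div_le_one (zpow_pos (mod_cast (Fact.out : p.Prime).pos) _)] at hnorm
  obtain ⟨a, rfl⟩ := (Padic.norm_int_le_pow_iff_dvd z k).mp hz
  exact ⟨a, by push_cast; field_simp⟩

lemma exists_intVec_eq_zpow_smul {ι : Type*} {q : ι → ℚ} (hq : ∀ i, IsZInvP p (q i)) {k : ℤ}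
    (hk : ∀ i, ‖(q i : ℚ_[p])‖ ≤ (p : ℝ) ^ k) :
    ∃ z : ι → ℤ, (fun i => (z i : ℚ)) = (p : ℚ) ^ k • q := by
  have hint (i) : ∃ z : ℤ, (z : ℚ) = (p : ℚ) ^ k * q i := by
    refine ((hq i).zpow_mul k).exists_int_eq ?_
    push_cast
    rw [norm_mul, Padic.norm_p_zpow, zpow_neg]
    exact inv_mul_le_one_of_le₀ (hk i) (by positivity)
  choose z hz using hint
  exact ⟨z, funext hz⟩

lemma exists_supNormP_eq_zpow {q : Fin n → ℚ} (hq : 0 < supNormP p q) :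
    ∃ m : ℤ, supNormP p q = (p : ℝ) ^ m := by
  rw [supNormP_eq_norm] at hq ⊢
  obtain ⟨i, hi⟩ := exists_norm_apply_eq_norm hq
  rw [← hi] at hq ⊢
  exact ⟨_, Padic.norm_eq_zpow_neg_valuation (norm_pos_iff.mp hq)⟩

lemma norm_le_supNormP (q : Fin n → ℚ) (i : Fin n) : ‖(q i : ℚ_[p])‖ ≤ supNormP p q := by
  rw [supNormP_eq_norm]
  exact norm_le_pi_norm (fun i => (q i : ℚ_[p])) i

lemma norm_sum_mul_le (y : Fin n → ℚ_[p]) (q : Fin n → ℚ) :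
    ‖∑ i, (q i : ℚ_[p]) * y i‖ ≤ supNormP p q * ‖y‖ := by
  have hA := supNormP_nonneg (p := p) q
  refine IsUltrametricDist.norm_sum_le_of_forall_le_of_nonneg (by positivity) fun i _ => ?_
  rw [norm_mul]
  gcongr
  exacts [norm_le_supNormP q i, norm_le_pi_norm y i]

lemma exists_intVec_norm_linForm_eq (y : Fin n → ℚ_[p]) :
    ∃ K : ℝ, 1 ≤ K ∧ ∀ (q₀ : ℚ) (q : Fin n → ℚ), IsZInvP p q₀ → (∀ i, IsZInvP p (q i)) →
      0 < supNormP p q → ‖(∑ i, (q i : ℚ_[p]) * y i) + (q₀ : ℚ_[p])‖ ≤ supNormP p q →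
      ∃ z : Fin (n + 1) → ℤ, ‖z‖ = K * (supNormP p q * supNormR (Fin.cons q₀ q)) ∧
        ‖linForm (Fin.cons 1 y : Fin (n + 1) → ℚ_[p]) z‖ =
          (K * supNormP p q)⁻¹ * ‖(∑ i, (q i : ℚ_[p]) * y i) + (q₀ : ℚ_[p])‖ := by
  have hp : (1 : ℝ) < p := mod_cast (Fact.out : p.Prime).one_lt
  obtain ⟨s, hs⟩ := pow_unbounded_of_one_lt ‖y‖ hp
  have hs₁ : 1 ≤ (p : ℝ) ^ s := one_le_pow₀ hp.le
  refine ⟨(p : ℝ) ^ s, hs₁, fun q₀ q hq₀ hq hA hΛ => ?_⟩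
  obtain ⟨m, hm⟩ := exists_supNormP_eq_zpow hA
  set A := supNormP p q
  set Λ : ℚ_[p] := (∑ i, (q i : ℚ_[p]) * y i) + (q₀ : ℚ_[p])
  have hsm : (p : ℝ) ^ (s + m : ℤ) = p ^ s * A := by
    rw [zpow_add₀ (by positivity), zpow_natCast, hm]
  have hAs : A ≤ p ^ s * A := le_mul_of_one_le_left hA.le hs₁
  have hq₀_le : ‖(q₀ : ℚ_[p])‖ ≤ p ^ s * A := by
    have heq : (q₀ : ℚ_[p]) = Λ + -∑ i, (q i : ℚ_[p]) * y i := by simp [Λ]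
    rw [heq]
    refine (IsUltrametricDist.norm_add_le_max _ _).trans (max_le (hΛ.trans hAs) ?_)
    rw [norm_neg, mul_comm]
    exact (norm_sum_mul_le y q).trans (by gcongr)
  obtain ⟨z, hz⟩ := exists_intVec_eq_zpow_smul (p := p) (q := Fin.cons q₀ q) (k := s + m)
    (Fin.cases hq₀ hq) (Fin.cases (hsm ▸ hq₀_le) fun i =>
      hsm ▸ (norm_le_supNormP q i).trans hAs)
  have hlin : linForm (Fin.cons 1 y : Fin (n + 1) → ℚ_[p]) z = (p : ℚ_[p]) ^ (s + m : ℤ) * Λ := by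
    have hz' (i) : (z i : ℚ_[p]) =
        (p : ℚ_[p]) ^ (s + m : ℤ) * ((Fin.cons q₀ q : Fin (n + 1) → ℚ) i) := by
      simpa using congrArg (Rat.cast : ℚ → ℚ_[p]) (congrFun hz i)
    simp only [linForm_cons_one, hz', Fin.cons_succ, Fin.cons_zero, Λ, mul_add, Finset.mul_sum,
      mul_assoc]
  refine ⟨z, ?_, ?_⟩
  · rw [← supNormR_intCast, hz, supNormR_smul, Rat.cast_zpow, Rat.cast_natCast,
      abs_of_pos (by positivity), hsm, mul_assoc]
  · rw [hlin, norm_mul, Padic.norm_p_zpow, zpow_neg, hsm]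

lemma not_wpCond_of_isDiophantine {y : Fin n → ℚ_[p]} {v v' : ℝ} (hv : 0 ≤ v) (hvv' : v < v')
    (h : IsDiophantine (v + 1) (Fin.cons 1 y : Fin (n + 1) → ℚ_[p])) : ¬ WpCond p y v' := by
  intro hW
  obtain ⟨c, hc, h⟩ := h
  obtain ⟨K, hK, hint⟩ := exists_intVec_norm_linForm_eq y
  have hlim := (tendsto_rpow_neg_atTop (sub_pos.mpr hvv')).eventually_lt_const
    (show 0 < c * K ^ (-(v + 1)) by positivity)
  obtain ⟨T, hT⟩ := Filter.eventually_atTop.mp hlim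
  obtain ⟨q₀, q, hq₀, hq, hTX, hΛ⟩ := hW (max 1 T)
  set A := supNormP p q
  set Q := supNormR (Fin.cons q₀ q)
  set X := A * Q
  obtain ⟨hX₁, hTX⟩ := max_lt_iff.mp hTX
  have hX : 0 < X := zero_lt_one.trans hX₁
  have hA : 0 < A := pos_of_mul_pos_left hX (supNormR_nonneg _)
  have hQ : Q⁻¹ = A * X⁻¹ := by simp only [X]; field_simp
  rw [hQ] at hΛ
  have hΛA : X ^ (-v') * (A * X⁻¹) ≤ A := calc
    _ ≤ 1 * (A * 1) := by
      gcongr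
      exacts [Real.rpow_le_one_of_one_le_of_nonpos hX₁.le (by linarith),
        inv_le_one_of_one_le₀ hX₁.le]
    _ = A := by ring
  obtain ⟨z, hz, hzlin⟩ := hint q₀ q hq₀ hq hA (hΛ.le.trans hΛA)
  have hz₀ : z ≠ 0 := norm_pos_iff.mp (hz ▸ by positivity)
  have hlow := h z hz₀
  rw [hz, hzlin] at hlow
  refine (hT X hTX.le).not_ge ?_
  calc c * K ^ (-(v + 1)) = c * (K * X) ^ (-(v + 1)) * X ^ (v + 1) := by
        rw [Real.mul_rpow (by positivity) hX.le, Real.rpow_neg hX.le]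
        field_simp
    _ ≤ (K * A)⁻¹ * (X ^ (-v') * (A * X⁻¹)) * X ^ (v + 1) := by
        refine mul_le_mul_of_nonneg_right (hlow.trans ?_) (by positivity)
        gcongr
    _ = K⁻¹ * X ^ (-(v' - v)) := by
        rw [neg_sub, sub_eq_add_neg, Real.rpow_add hX, Real.rpow_add hX, Real.rpow_one]
        field_simp
    _ ≤ X ^ (-(v' - v)) := mul_le_of_le_one_left (by positivity) (inv_le_one_of_one_le₀ hK)

end Exponent

section Main

variable {p} {n : ℕ}

lemma not_wpCond_of_wpExp_lt {y : Fin n → ℚ_[p]} {v : ℝ}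
    (h : wpExp p y < ENNReal.ofReal v) : ¬ WpCond p y v := fun hv =>
  h.not_ge (le_iSup₂_of_le (f := fun (v : ℝ) (_ : 0 < v ∧ WpCond p y v) => ENNReal.ofReal v)
    v ⟨ENNReal.ofReal_pos.mp (bot_le.trans_lt h), hv⟩ le_rfl)

lemma wpExp_le_of_forall_isDiophantine {y : Fin n → ℚ_[p]} {w : ℝ} (hw : 0 ≤ w)
    (h : ∀ i : ℕ, IsDiophantine (w + 1 / ((i : ℝ) + 1) + 1) (Fin.cons 1 y : Fin (n + 1) → ℚ_[p])) :
    wpExp p y ≤ ENNReal.ofReal w := by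
  refine iSup₂_le fun v hv => ENNReal.ofReal_le_ofReal ?_
  by_contra! hwv
  obtain ⟨i, hi⟩ := exists_nat_one_div_lt (sub_pos.mpr hwv)
  exact not_wpCond_of_isDiophantine (by positivity) (lt_sub_iff_add_lt'.mp hi) (h i) hv.2

lemma analyticAt_finCons_one {E : Type*} [NormedAddCommGroup E] [NormedSpace ℚ_[p] E]
    {f : E → Fin n → ℚ_[p]} {x₀ : E} (hf : AnalyticAt ℚ_[p] f x₀) :
    AnalyticAt ℚ_[p] (fun x => (Fin.cons 1 (f x) : Fin (n + 1) → ℚ_[p])) x₀ :=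
  analyticAt_pi_iff.mpr (Fin.cases analyticAt_const (analyticAt_pi_iff.mp hf))

theorem statement3_general {E : Type*} [NormedAddCommGroup E] [NormedSpace ℚ_[p] E]
    [IsUltrametricDist E] [ProperSpace E] [MeasurableSpace E] [BorelSpace E]
    {f : E → Fin n → ℚ_[p]} {x₀ : E} (hf : AnalyticAt ℚ_[p] f x₀) :
    ∃ W ∈ nhds x₀, ∀ (μ : Measure E), μ.IsAddHaarMeasure →
      ∀ᵐ x ∂μ, x ∈ W → wpExp p (f x) ≤ wpExp p (f x₀) := by
  obtain ⟨k₀, hk₀⟩ := ae_isDiophantine_of_isDiophantine (analyticAt_finCons_one hf)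
  refine ⟨padicBall p x₀ k₀, (isOpen_padicBall p x₀ k₀).mem_nhds (mem_padicBall_self p x₀ k₀),
    fun μ _ => ?_⟩
  by_cases htop : wpExp p (f x₀) = ⊤
  · simp [htop]
  lift wpExp p (f x₀) to ℝ≥0 using htop with w hw
  have hdioph (i : ℕ) : ∀ᵐ x ∂μ, x ∈ padicBall p x₀ k₀ →
      IsDiophantine (w + 1 / ((i : ℝ) + 1) + 1) (Fin.cons 1 (f x) : Fin (n + 1) → ℚ_[p]) := by
    have hi : (0 : ℝ) < 1 / ((i : ℝ) + 1) := by positivity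
    refine hk₀ μ (w + 1 / ((i : ℝ) + 1) / 2 + 1) _ (by positivity) (by linarith)
      (isDiophantine_of_not_wpCond (by positivity) (not_wpCond_of_wpExp_lt ?_))
    rw [← hw, ← ENNReal.ofReal_coe_nnreal]
    exact (ENNReal.ofReal_lt_ofReal_iff_of_nonneg w.2).mpr (by simpa using by positivity)
  filter_upwards [ae_all_iff.mpr hdioph] with x hx hxW
  simpa using wpExp_le_of_forall_isDiophantine w.2 fun i => hx i hxW

end Main

/-- If `f : U → ℚ_p^n` is analytic on an open `U ⊆ ℚ_p^d`, `v ≥ n` and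
`w_p(f(x₀)) ≤ v` for some `x₀ ∈ U`, then for Haar-almost every `x` in a neighbourhood of
`x₀` one has `w_p(f(x)) ≤ v`. -/
theorem statement3 (p : ℕ) [Fact p.Prime] (n d : ℕ) (hn : 1 ≤ n) (hd : 1 ≤ d)
    (U : Set (Fin d → ℚ_[p])) (hU : IsOpen U)
    (f : (Fin d → ℚ_[p]) → (Fin n → ℚ_[p])) (hf : AnalyticOnNhd ℚ_[p] f U)
    (v : ℝ) (hv : (n : ℝ) ≤ v) (x₀ : Fin d → ℚ_[p]) (hx₀ : x₀ ∈ U)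
    (hw : wpExp p (f x₀) ≤ ENNReal.ofReal v) :
    ∃ W : Set (Fin d → ℚ_[p]), W ∈ nhds x₀ ∧
      ∀ (μ : Measure (Fin d → ℚ_[p])), μ.IsAddHaarMeasure →
        ∀ᵐ x ∂μ, x ∈ W → wpExp p (f x) ≤ ENNReal.ofReal v := by
  obtain ⟨W, hW, h⟩ := statement3_general (hf x₀ hx₀)
  exact ⟨W, hW, fun μ hμ => (h μ hμ).mono fun x hx hxW => (hx hxW).trans hw⟩

end PadicDioph
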